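/- arXiv:2101.06183 — 10 statements merged into one kernel-verified Lean document; each statement's English description precedes it below -/
import Mathlib

section
/- Under Conditions (B1), (B2) and (B3), the family of random variables {N(t)/v(δ(t)) : t > 0} satisfies the large deviation principle with speed v(δ(t)) and good rate function Λ*, i.e. Λ* is lower semicontinuous with compact level sets, limsup_{t→∞} (1/v(δ(t))) log P(N(t)/v(δ(t)) ∈ C) ≤ −inf_{x∈C} Λ*(x) for every closed set C ⊆ ℝ, and liminf_{t→∞} (1/v(δ(t))) log P(N(t)/v(δ(t)) ∈ O) ≥ −inf_{x∈O} Λ*(x) for every open set O ⊆ ℝ. -/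
open Filter Topology

/-- Series function `D_j(x) = ∑_{k≥0} d_{k,j} x^k`. -/
noncomputable def Dser (d : ℕ → ℕ → ℝ) (j : ℕ) (x : ℝ) : ℝ := ∑' k : ℕ, d k j * x ^ k

/-- Normalizing constant `∑_{j≥0} d_{j,j} (δ_j(t))^j / D_j(δ_j(t))`. -/
noncomputable def Znorm (d : ℕ → ℕ → ℝ) (δf : ℕ → ℝ → ℝ) (t : ℝ) : ℝ :=
  ∑' j : ℕ, d j j * (δf j t) ^ j / Dser d j (δf j t)

/-- `P(N(t)=k)`. -/
noncomputable def pmfN (d : ℕ → ℕ → ℝ) (δf : ℕ → ℝ → ℝ) (t : ℝ) (k : ℕ) : ℝ :=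
  (d k k * (δf k t) ^ k / Dser d k (δf k t)) / Znorm d δf t

/-- `E[N(t)]`. -/
noncomputable def meanN (d : ℕ → ℕ → ℝ) (δf : ℕ → ℝ → ℝ) (t : ℝ) : ℝ :=
  ∑' k : ℕ, (k : ℝ) * pmfN d δf t k

/-- `Λ(θ) = Δ(e^θ) - Δ(1)`. -/
noncomputable def Lam (Δ : ℝ → ℝ) (θ : ℝ) : ℝ := Δ (Real.exp θ) - Δ 1

/-- The remainder `R_n(u,t)` (an empty sum when `n = 0`). -/
noncomputable def Rfun (n : ℕ) (d : ℕ → ℕ → ℝ) (δf : ℕ → ℝ → ℝ) (u t : ℝ) : ℝ :=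
  ∑ k ∈ Finset.range n, (d k k * (u * δf k t) ^ k / Dser d k (δf k t)
    - d k n * (u * δf n t) ^ k / Dser d n (δf n t))

/-- Conditions (B1), (B2), (B3), together with the standing assumptions on the model:
nonnegative coefficients, convergent and positive series functions, positive and divergent
functions `δ_j`. For `j ≥ n` one has `d_{k,j} = d_{k,n} =: d_k` and `δ_j = δ_n =: δ`. -/
structure PSCond (n : ℕ) (d : ℕ → ℕ → ℝ) (δf : ℕ → ℝ → ℝ) (v Δ : ℝ → ℝ) : Prop where
  d_nonneg : ∀ k j : ℕ, 0 ≤ d k j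
  D_summable : ∀ j : ℕ, ∀ x : ℝ, 0 < x → Summable (fun k : ℕ => d k j * x ^ k)
  D_pos : ∀ j : ℕ, ∀ x : ℝ, 0 < x → 0 < Dser d j x
  delta_pos : ∀ j : ℕ, ∀ t : ℝ, 0 < t → 0 < δf j t
  delta_tendsto : ∀ j : ℕ, Tendsto (δf j) atTop atTop
  B1_d : ∀ j : ℕ, n ≤ j → ∀ k : ℕ, d k j = d k n
  B1_delta : ∀ j : ℕ, n ≤ j → δf j = δf n
  v_pos : ∀ t : ℝ, 0 < t → 0 < v t
  v_tendsto : Tendsto v atTop atTop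
  Delta_diff : ∀ u : ℝ, 0 < u → DifferentiableAt ℝ Δ u
  B1_lim : ∀ u : ℝ, 0 < u →
    Tendsto (fun t : ℝ => (v t)⁻¹ * Real.log (Dser d n (u * t))) atTop (𝓝 (Δ u))
  B2 : ∀ m : ℕ, ∃ k : ℕ, m ≤ k ∧ 0 < d k k
  B3_lim : ∀ k : ℕ, k < n → 0 < d k n →
    Tendsto (fun t : ℝ => (d k k * (δf k t) ^ k / Dser d k (δf k t)) /
      (d k n * (δf n t) ^ k / Dser d n (δf n t))) atTop (𝓝 0)
  B3_zero : ∀ k : ℕ, k < n → d k n = 0 → d k k = 0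

/-- Extended-real logarithm: `elog 0 = ⊥`. -/
noncomputable def elog (x : ℝ) : EReal := if x ≤ 0 then ⊥ else ((Real.log x : ℝ) : EReal)

/-- The Legendre transform `Λ*(x) = sup_θ (θ x - Λ(θ))`, as an extended real number. -/
noncomputable def LamStar (Δ : ℝ → ℝ) (x : ℝ) : EReal :=
  ⨆ θ : ℝ, ((θ * x - Lam Δ θ : ℝ) : EReal)

/-- `P(N(t)/v(δ(t)) ∈ S)`. -/
noncomputable def probScaled (n : ℕ) (d : ℕ → ℕ → ℝ) (δf : ℕ → ℝ → ℝ) (v : ℝ → ℝ)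
    (t : ℝ) (S : Set ℝ) : ℝ :=
  ∑' k : ℕ, S.indicator (fun _ => pmfN d δf t k) ((k : ℝ) / v (δf n t))

lemma ge_upper (p : ℝ → ℕ → ℝ) (s L : ℝ → ℝ) (hs : Tendsto s atTop atTop)
    (hp : ∀ᶠ t in atTop, ∀ k, 0 ≤ p t k)
    (hsum : ∀ᶠ t in atTop, ∀ θ : ℝ, Summable (fun k : ℕ => p t k * Real.exp (θ * k)))
    (hup : ∀ θ b, L θ < b → ∀ᶠ t in atTop,
      ∑' k : ℕ, p t k * Real.exp (θ * k) ≤ Real.exp (s t * b))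
    (F : Finset ℝ) (C : Set ℝ) (a b : ℝ) (hab : -a < b)
    (hF : ∀ x ∈ C, ∃ θ ∈ F, a < θ * x - L θ) :
    ∀ᶠ t in atTop, ∑' k : ℕ, C.indicator (fun _ => p t k) ((k : ℝ) / s t)
      ≤ Real.exp (s t * b) := by
  set ε := (b + a) / 2 with hε
  have hεp : 0 < ε := by rw [hε]; linarith
  have h1 : ∀ᶠ t in atTop, ∀ θ ∈ F,
      ∑' k : ℕ, p t k * Real.exp (θ * k) ≤ Real.exp (s t * (L θ + ε)) := by
    rw [Filter.eventually_all_finset]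
    intro θ _
    exact hup θ _ (by linarith)
  have h2 : ∀ᶠ t in atTop, (F.card : ℝ) ≤ Real.exp (s t * ε) :=
    (Real.tendsto_exp_atTop.comp (hs.atTop_mul_const hεp)).eventually_ge_atTop _
  filter_upwards [hp, hsum, h1, h2, hs.eventually_gt_atTop 0] with t hp hsum h1 h2 hst
  have hS : HasSum (fun k : ℕ => ∑ θ ∈ F, p t k * Real.exp (θ * k) * Real.exp (-(s t * (a + L θ))))
      (∑ θ ∈ F, (∑' k : ℕ, p t k * Real.exp (θ * k)) * Real.exp (-(s t * (a + L θ)))) :=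
    hasSum_sum fun θ _ => (hsum θ).hasSum.mul_right _
  have hpt : ∀ k : ℕ, C.indicator (fun _ => p t k) ((k : ℝ) / s t) ≤
      ∑ θ ∈ F, p t k * Real.exp (θ * k) * Real.exp (-(s t * (a + L θ))) := by
    intro k
    have hnn : ∀ θ ∈ F, 0 ≤ p t k * Real.exp (θ * k) * Real.exp (-(s t * (a + L θ))) := by
      intro θ _
      have := hp k
      positivity
    by_cases hk : ((k : ℝ) / s t) ∈ C
    · rw [Set.indicator_of_mem hk]
      obtain ⟨θ, hθ, hlt⟩ := hF _ hk
      refine le_trans ?_ (Finset.single_le_sum hnn hθ)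
      rw [mul_assoc, ← Real.exp_add]
      refine le_mul_of_one_le_right (hp k) (Real.one_le_exp ?_)
      have h3 : s t * (a + L θ) ≤ s t * (θ * (k / s t)) :=
        mul_le_mul_of_nonneg_left (by linarith) hst.le
      have h4 : s t * (θ * (k / s t)) = θ * k := by field_simp
      linarith
    · rw [Set.indicator_of_notMem hk]
      exact Finset.sum_nonneg hnn
  have hnn : ∀ k : ℕ, 0 ≤ C.indicator (fun _ => p t k) ((k : ℝ) / s t) :=
    fun k => Set.indicator_nonneg (fun _ _ => hp k) _
  have hsm : Summable (fun k : ℕ => C.indicator (fun _ => p t k) ((k : ℝ) / s t)) :=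
    Summable.of_nonneg_of_le hnn hpt hS.summable
  calc _ ≤ _ := hsm.tsum_le_tsum hpt hS.summable
    _ = _ := hS.tsum_eq
    _ ≤ ∑ θ ∈ F, Real.exp (s t * (ε - a)) := by
        refine Finset.sum_le_sum fun θ hθ => ?_
        refine (mul_le_mul_of_nonneg_right (h1 θ hθ) (Real.exp_pos _).le).trans (le_of_eq ?_)
        rw [← Real.exp_add]; congr 1; ring
    _ = F.card * Real.exp (s t * (ε - a)) := by simp
    _ ≤ Real.exp (s t * ε) * Real.exp (s t * (ε - a)) :=
        mul_le_mul_of_nonneg_right h2 (Real.exp_pos _).le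
    _ = _ := by rw [← Real.exp_add]; congr 1; rw [hε]; ring

lemma exists_cover (L : ℝ → ℝ) (C : Set ℝ) (hC : IsClosed C) (a : ℝ)
    (h : ∀ x ∈ C, ∃ θ : ℝ, a < θ * x - L θ) :
    ∃ F : Finset ℝ, ∀ x ∈ C, ∃ θ ∈ F, a < θ * x - L θ := by
  set R := |a| + |L 1| + |L (-1)| + 1 with hR
  have hK : IsCompact (C ∩ Set.Icc (-R) R) := isCompact_Icc.inter_left hC
  obtain ⟨F, hF⟩ := hK.elim_finite_subcover (fun θ : ℝ => {x : ℝ | a < θ * x - L θ})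
    (fun θ => isOpen_lt continuous_const (by fun_prop))
    (fun x hx => by
      obtain ⟨θ, hθ⟩ := h x hx.1
      exact Set.mem_iUnion.2 ⟨θ, hθ⟩)
  classical
  refine ⟨insert 1 (insert (-1) F), fun x hx => ?_⟩
  have e1 := le_abs_self a
  have e2 := le_abs_self (L 1)
  have e3 := le_abs_self (L (-1))
  have e4 := abs_nonneg (L 1)
  have e5 := abs_nonneg (L (-1))
  by_cases h1 : R < x
  · exact ⟨1, by simp, by linarith⟩
  by_cases h2 : x < -R
  · exact ⟨-1, by simp, by linarith⟩
  have := hF ⟨hx, by constructor <;> linarith⟩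
  simp only [Set.mem_iUnion] at this
  obtain ⟨θ, hθ, hlt⟩ := this
  exact ⟨θ, by simp [hθ], hlt⟩

lemma ge_lower (p : ℝ → ℕ → ℝ) (s L : ℝ → ℝ) (hs : Tendsto s atTop atTop)
    (hp : ∀ᶠ t in atTop, ∀ k, 0 ≤ p t k)
    (hsum : ∀ᶠ t in atTop, ∀ θ : ℝ, Summable (fun k : ℕ => p t k * Real.exp (θ * k)))
    (hup : ∀ θ b, L θ < b → ∀ᶠ t in atTop,
      ∑' k : ℕ, p t k * Real.exp (θ * k) ≤ Real.exp (s t * b))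
    (hlo : ∀ θ b, b < L θ → ∀ᶠ t in atTop,
      Real.exp (s t * b) ≤ ∑' k : ℕ, p t k * Real.exp (θ * k))
    (θ y ρ b : ℝ) (hL : HasDerivAt L y θ) (hρ : 0 < ρ)
    (hb : b < L θ - θ * y - |θ| * ρ) (O : Set ℝ) (hO : Metric.ball y ρ ⊆ O) :
    ∀ᶠ t in atTop, Real.exp (s t * b) ≤
      ∑' k : ℕ, O.indicator (fun _ => p t k) ((k : ℝ) / s t) := by
  have hexp : ∀ (t : ℝ) (k : ℕ) (l : ℝ), p t k * Real.exp (θ * k) * Real.exp (l * k) =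
      p t k * Real.exp ((θ + l) * k) := by
    intro t k l
    rw [mul_assoc, ← Real.exp_add]; congr 2; ring
  -- choose a small tilt
  have hsm : ∀ᶠ l in 𝓝 (0 : ℝ), |L (θ + l) - L θ - l * y| ≤ (ρ / 2) * |l| := by
    have := (hasDerivAt_iff_isLittleO_nhds_zero.1 hL).def (half_pos hρ)
    simpa using this
  obtain ⟨r, hr, hball⟩ := Metric.eventually_nhds_iff.1 hsm
  set l := r / 2 with hl
  have hlp : 0 < l := half_pos hr
  have hl1 := hball (y := l) (by simp [abs_of_pos hlp]; linarith)
  have hl2 := hball (y := -l) (by simp [abs_of_pos hlp]; linarith)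
  rw [abs_neg] at hl2
  rw [abs_of_pos hlp, abs_le] at hl1 hl2
  set c := l * ρ / 4 with hc
  have hcp : 0 < c := by positivity
  have hout := ge_upper (fun t k => p t k * Real.exp (θ * k)) s (fun l => L (θ + l)) hs
    (by filter_upwards [hp] with t ht k; exact mul_nonneg (ht k) (Real.exp_pos _).le)
    (by filter_upwards [hsum] with t ht l; simp only [hexp]; exact ht _)
    (by intro l b hlb; simp only [hexp]; exact hup _ _ hlb)
    {l, -l} (Metric.ball y ρ)ᶜ (c - L θ) (L θ - c / 2) (by linarith)
    (by
      intro x hx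
      simp only [Set.mem_compl_iff, Metric.mem_ball, Real.dist_eq, not_lt] at hx
      rcases le_abs.1 hx with h | h
      · refine ⟨l, by simp, ?_⟩
        nlinarith [mul_le_mul_of_nonneg_left h hlp.le, mul_pos hlp hρ]
      · refine ⟨-l, by simp, ?_⟩
        nlinarith [mul_le_mul_of_nonneg_left h hlp.le, mul_pos hlp hρ])
  set η := (L θ - θ * y - |θ| * ρ - b) / 2 with hη
  have hηp : 0 < η := by rw [hη]; linarith
  set e := min (c / 4) η with he
  have hep : 0 < e := lt_min (by positivity) hηp
  have hec : e ≤ c / 4 := min_le_left _ _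
  have heη : e ≤ η := min_le_right _ _
  have h2 : ∀ᶠ t in atTop, 2 ≤ Real.exp (s t * e) :=
    (Real.tendsto_exp_atTop.comp (hs.atTop_mul_const hep)).eventually_ge_atTop _
  filter_upwards [hp, hsum, hout, h2, hlo θ (L θ - e) (by linarith), hs.eventually_gt_atTop 0]
    with t hp hsum hout h2 hM hst
  have hs0 : Summable (p t) := by simpa using hsum 0
  have hsO : Summable (fun k : ℕ => O.indicator (fun _ => p t k) ((k : ℝ) / s t)) :=
    Summable.of_nonneg_of_le (fun k => Set.indicator_nonneg (fun _ _ => hp k) _)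
      (fun k => Set.indicator_le_self' (fun _ _ => hp k) _) hs0
  have hsC : Summable (fun k : ℕ => (Metric.ball y ρ)ᶜ.indicator
      (fun _ => p t k * Real.exp (θ * k)) ((k : ℝ) / s t)) :=
    Summable.of_nonneg_of_le
      (fun k => Set.indicator_nonneg (fun _ _ => mul_nonneg (hp k) (Real.exp_pos _).le) _)
      (fun k => Set.indicator_le_self' (fun _ _ => mul_nonneg (hp k) (Real.exp_pos _).le) _)
      (hsum θ)
  have hpt : ∀ k : ℕ, p t k * Real.exp (θ * k) ≤
      O.indicator (fun _ => p t k) ((k : ℝ) / s t) * Real.exp (s t * (θ * y + |θ| * ρ)) +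
      (Metric.ball y ρ)ᶜ.indicator (fun _ => p t k * Real.exp (θ * k)) ((k : ℝ) / s t) := by
    intro k
    by_cases hk : (k : ℝ) / s t ∈ Metric.ball y ρ
    · rw [Set.indicator_of_mem (hO hk), Set.indicator_of_notMem (by simpa using hk), add_zero]
      refine mul_le_mul_of_nonneg_left (Real.exp_le_exp.2 ?_) (hp k)
      have h4 : θ * k = s t * (θ * (k / s t)) := by field_simp
      rw [h4]
      refine mul_le_mul_of_nonneg_left ?_ hst.le
      rw [Metric.mem_ball, Real.dist_eq] at hk
      have h5 : θ * (k / s t - y) ≤ |θ| * ρ :=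
        (le_abs_self _).trans (by rw [abs_mul]; gcongr)
      linarith
    · rw [Set.indicator_of_mem (s := (Metric.ball y ρ)ᶜ) hk]
      have : 0 ≤ O.indicator (fun _ => p t k) ((k : ℝ) / s t) :=
        Set.indicator_nonneg (fun _ _ => hp k) _
      have := mul_nonneg this (Real.exp_pos (s t * (θ * y + |θ| * ρ))).le
      linarith
  have htot := (hsum θ).tsum_le_tsum hpt ((hsO.mul_right _).add hsC)
  rw [(hsO.mul_right _).tsum_add hsC, tsum_mul_right] at htot
  set P := ∑' k : ℕ, O.indicator (fun _ => p t k) ((k : ℝ) / s t)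
  -- outside at most half
  have h6 : 2 * Real.exp (s t * (L θ - c / 2)) ≤ Real.exp (s t * (L θ - e)) := by
    calc _ ≤ Real.exp (s t * e) * Real.exp (s t * (L θ - c / 2)) := by gcongr
      _ = Real.exp (s t * (L θ - c / 2 + e)) := by rw [← Real.exp_add]; congr 1; ring
      _ ≤ _ := by
        refine Real.exp_le_exp.2 (mul_le_mul_of_nonneg_left ?_ hst.le); linarith
  have h7 : Real.exp (s t * (L θ - e)) ≤ 2 * (P * Real.exp (s t * (θ * y + |θ| * ρ))) := by
    linarith
  have h8 : 2 * Real.exp (s t * b) * Real.exp (s t * (θ * y + |θ| * ρ)) ≤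
      Real.exp (s t * (L θ - e)) := by
    calc _ ≤ Real.exp (s t * e) * Real.exp (s t * b) * Real.exp (s t * (θ * y + |θ| * ρ)) := by
          gcongr
      _ = Real.exp (s t * (e + b + (θ * y + |θ| * ρ))) := by
          rw [← Real.exp_add, ← Real.exp_add]; congr 1; ring
      _ ≤ _ := by
        refine Real.exp_le_exp.2 (mul_le_mul_of_nonneg_left ?_ hst.le); linarith
  have h9 := Real.exp_pos (s t * (θ * y + |θ| * ρ))
  have h10 : Real.exp (s t * b) * Real.exp (s t * (θ * y + |θ| * ρ)) ≤
      P * Real.exp (s t * (θ * y + |θ| * ρ)) := by linarith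
  exact le_of_mul_le_mul_right h10 h9

/-- Approximation of points by exposed points, with quadratic penalization. -/
lemma exists_exposed (L : ℝ → ℝ) (hL : Differentiable ℝ L) (hL0 : L 0 = 0) (x m r : ℝ)
    (hr : 0 < r) (hm : ∀ θ, θ * x - L θ ≤ m) :
    ∃ θ y, HasDerivAt L y θ ∧ |y - x| < r ∧ θ * y - L θ ≤ m := by
  have hm0 : 0 ≤ m := by have := hm 0; simp [hL0] at this; exact this
  set ε := r ^ 2 / (4 * (m + 1)) / 2 with hε
  have hεp : 0 < ε := by positivity
  set f : ℝ → ℝ := fun θ => L θ - θ * x + ε * θ ^ 2 with hf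
  have hfc : Continuous f := by
    have := hL.continuous
    fun_prop
  have hb : ∃ θ, ∀ θ', f θ ≤ f θ' := by
    refine Continuous.exists_forall_le_of_isBounded hfc 0 ?_
    refine (Metric.isBounded_Icc (-(m / ε + 1)) (m / ε + 1)).subset ?_
    intro θ hθ
    have hθ' : L θ - θ * x + ε * θ ^ 2 ≤ 0 := by simpa [hf, hL0] using hθ
    have h1 : ε * θ ^ 2 ≤ m := by linarith [hm θ]
    have h2 : θ ^ 2 ≤ m / ε := by rw [le_div_iff₀ hεp]; linarith
    have h3 : 0 ≤ m / ε := by positivity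
    constructor <;> nlinarith
  obtain ⟨θ, hθ⟩ := hb
  have hd : HasDerivAt f (deriv L θ - x + ε * (2 * θ)) θ := by
    have h1 := (hL θ).hasDerivAt
    have h2 : HasDerivAt (fun θ : ℝ => θ * x) x θ := by simpa using (hasDerivAt_id θ).mul_const x
    have h3 : HasDerivAt (fun θ : ℝ => ε * θ ^ 2) (ε * (2 * θ)) θ := by
      simpa using (hasDerivAt_pow 2 θ).const_mul ε
    exact (h1.sub h2).add h3
  have h0 : deriv L θ - x + ε * (2 * θ) = 0 :=
    IsLocalMin.hasDerivAt_eq_zero (Filter.Eventually.of_forall hθ) hd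
  have h1 : ε * θ ^ 2 ≤ m := by
    have := hθ 0
    simp only [hf, hL0] at this
    have := hm θ
    linarith
  refine ⟨θ, deriv L θ, (hL θ).hasDerivAt, ?_, ?_⟩
  · have h2 : deriv L θ - x = -(ε * (2 * θ)) := by linarith
    rw [h2, abs_neg]
    refine abs_lt_of_sq_lt_sq ?_ hr.le
    have h3 : (ε * (2 * θ)) ^ 2 ≤ 4 * ε * m := by nlinarith
    have h4 : 4 * ε * (m + 1) = r ^ 2 / 2 := by rw [hε]; field_simp
    nlinarith
  · have h2 : deriv L θ = x - ε * (2 * θ) := by linarith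
    rw [h2]
    nlinarith [hm θ, mul_nonneg hεp.le (sq_nonneg θ)]

lemma elog_upper (s P b : ℝ) (hs : 0 < s) (h : P ≤ Real.exp (s * b)) :
    ((s⁻¹ : ℝ) : EReal) * elog P ≤ (b : EReal) := by
  unfold elog
  split_ifs with hP
  · rw [EReal.coe_mul_bot_of_pos (inv_pos.2 hs)]; exact bot_le
  · push Not at hP
    rw [← EReal.coe_mul, EReal.coe_le_coe_iff, inv_mul_le_iff₀ hs]
    exact (Real.log_le_iff_le_exp hP).2 h

lemma elog_lower (s P b : ℝ) (hs : 0 < s) (h : Real.exp (s * b) ≤ P) :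
    (b : EReal) ≤ ((s⁻¹ : ℝ) : EReal) * elog P := by
  have hP : 0 < P := (Real.exp_pos _).trans_le h
  unfold elog
  rw [if_neg (not_le.2 hP), ← EReal.coe_mul, EReal.coe_le_coe_iff, le_inv_mul_iff₀ hs]
  exact (Real.le_log_iff_exp_le hP).2 h

section model
variable {n : ℕ} {d : ℕ → ℕ → ℝ} {δf : ℕ → ℝ → ℝ} {v Δ : ℝ → ℝ}

lemma ps_dom (h : PSCond n d δf v Δ) : ∀ᶠ t in atTop, ∀ k : ℕ,
    0 ≤ d k k * (δf k t) ^ k / Dser d k (δf k t) ∧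
    d k k * (δf k t) ^ k / Dser d k (δf k t) ≤ d k n * (δf n t) ^ k / Dser d n (δf n t) := by
  have h1 : ∀ᶠ t in atTop, ∀ k ∈ Finset.range n,
      d k k * (δf k t) ^ k / Dser d k (δf k t) ≤ d k n * (δf n t) ^ k / Dser d n (δf n t) := by
    rw [Filter.eventually_all_finset]
    intro k hk
    have hk := Finset.mem_range.1 hk
    rcases (h.d_nonneg k n).eq_or_lt with h0 | h0
    · refine Filter.Eventually.of_forall fun t => ?_
      rw [h.B3_zero k hk h0.symm, ← h0]; simp
    · filter_upwards [(h.B3_lim k hk h0).eventually_le_const one_pos, eventually_gt_atTop 0]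
        with t ht htp
      have hδ := h.delta_pos n t htp
      have hD := h.D_pos n _ hδ
      exact (div_le_one (by positivity)).1 ht
  filter_upwards [h1, eventually_gt_atTop 0] with t ht htp k
  have hδ := h.delta_pos k t htp
  have hD := h.D_pos k _ hδ
  have hd := h.d_nonneg k k
  refine ⟨by positivity, ?_⟩
  rcases lt_or_ge k n with hk | hk
  · exact ht k (Finset.mem_range.2 hk)
  · have e1 : d k k = d k n := h.B1_d k hk k
    have e2 : δf k = δf n := h.B1_delta k hk
    have e3 : Dser d k = Dser d n := by
      funext x; unfold Dser; simp only [h.B1_d k hk]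
    rw [e1, e2, e3]

lemma ps_half (h : PSCond n d δf v Δ) : ∀ᶠ x in atTop,
    ∑ k ∈ Finset.range n, d k n * x ^ k ≤ (1 / 2) * Dser d n x := by
  obtain ⟨K, hK, hdK⟩ := h.B2 n
  rw [h.B1_d K hK K] at hdK
  have hlo : (fun x : ℝ => ∑ k ∈ Finset.range n, d k n * x ^ k) =o[atTop]
      fun x : ℝ => d K n * x ^ K := by
    have := Asymptotics.IsLittleO.sum (A := fun (k : ℕ) (x : ℝ) => d k n * x ^ k)
      (s := Finset.range n) (l := atTop) (g' := fun x : ℝ => d K n * x ^ K) (by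
        intro k hk
        have hk := Finset.mem_range.1 hk
        exact ((Asymptotics.isLittleO_pow_pow_atTop_of_lt (hk.trans_le hK)).const_mul_left
          (d k n)).const_mul_right hdK.ne')
    refine this.congr_left fun x => ?_
    simp
  filter_upwards [hlo.def (half_pos one_pos), eventually_gt_atTop 0] with x hx hxp
  have h1 : d K n * x ^ K ≤ Dser d n x :=
    (h.D_summable n x hxp).le_tsum K fun j _ => mul_nonneg (h.d_nonneg _ _) (by positivity)
  rw [Real.norm_eq_abs, Real.norm_eq_abs, abs_of_nonneg (a := d K n * x ^ K) (by positivity)] at hx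
  have := (le_abs_self _).trans hx
  linarith

lemma ps_W (h : PSCond n d δf v Δ) :
    (∀ᶠ t in atTop, ∀ u : ℝ, 0 < u →
      Summable (fun k : ℕ => d k k * (δf k t) ^ k / Dser d k (δf k t) * u ^ k) ∧
      ∑' k : ℕ, d k k * (δf k t) ^ k / Dser d k (δf k t) * u ^ k ≤
        Dser d n (u * δf n t) / Dser d n (δf n t)) ∧
    ∀ u : ℝ, 0 < u → ∀ᶠ t in atTop,
      (1 / 2) * (Dser d n (u * δf n t) / Dser d n (δf n t)) ≤
        ∑' k : ℕ, d k k * (δf k t) ^ k / Dser d k (δf k t) * u ^ k := by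
  have key : ∀ (t u : ℝ), 0 < t → 0 < u → HasSum
      (fun k : ℕ => d k n * (δf n t) ^ k / Dser d n (δf n t) * u ^ k)
      (Dser d n (u * δf n t) / Dser d n (δf n t)) := by
    intro t u ht hu
    have := ((h.D_summable n (u * δf n t) (mul_pos hu (h.delta_pos n t ht))).hasSum).div_const
      (Dser d n (δf n t))
    have e : (fun k : ℕ => d k n * (δf n t) ^ k / Dser d n (δf n t) * u ^ k) =
        fun k : ℕ => d k n * (u * δf n t) ^ k / Dser d n (δf n t) := by
      funext k
      rw [mul_pow]; ring
    rw [e]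
    exact this
  have hS : ∀ᶠ t in atTop, ∀ u : ℝ, 0 < u →
      Summable (fun k : ℕ => d k k * (δf k t) ^ k / Dser d k (δf k t) * u ^ k) ∧
      ∑' k : ℕ, d k k * (δf k t) ^ k / Dser d k (δf k t) * u ^ k ≤
        Dser d n (u * δf n t) / Dser d n (δf n t) := by
    filter_upwards [ps_dom h, eventually_gt_atTop 0] with t ht htp u hu
    have hle : ∀ k : ℕ, d k k * (δf k t) ^ k / Dser d k (δf k t) * u ^ k ≤
        d k n * (δf n t) ^ k / Dser d n (δf n t) * u ^ k :=
      fun k => mul_le_mul_of_nonneg_right (ht k).2 (by positivity)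
    have hsm := Summable.of_nonneg_of_le
      (fun k => mul_nonneg (ht k).1 (pow_nonneg hu.le k)) hle (key t u htp hu).summable
    refine ⟨hsm, ?_⟩
    rw [← (key t u htp hu).tsum_eq]
    exact hsm.tsum_le_tsum hle (key t u htp hu).summable
  refine ⟨hS, fun u hu => ?_⟩
  have hx : Tendsto (fun t => u * δf n t) atTop atTop := (h.delta_tendsto n).const_mul_atTop hu
  filter_upwards [ps_dom h, hS, hx.eventually (ps_half h), eventually_gt_atTop 0]
    with t ht hS hhalf htp
  have hD := h.D_pos n _ (h.delta_pos n t htp)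
  have hk := key t u htp hu
  have e1 := hk.summable.sum_add_tsum_nat_add n
  have e2 := (hS u hu).1.sum_add_tsum_nat_add n
  rw [hk.tsum_eq] at e1
  have e3 : ∀ i : ℕ, d (i + n) (i + n) * (δf (i + n) t) ^ (i + n) /
      Dser d (i + n) (δf (i + n) t) * u ^ (i + n) =
      d (i + n) n * (δf n t) ^ (i + n) / Dser d n (δf n t) * u ^ (i + n) := by
    intro i
    have hi : n ≤ i + n := by omega
    have e3 : Dser d (i + n) = Dser d n := by
      funext x; unfold Dser; simp only [h.B1_d _ hi]
    rw [h.B1_d _ hi, h.B1_delta _ hi, e3]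
  simp only [e3] at e2
  have e4 : 0 ≤ ∑ i ∈ Finset.range n, d i i * (δf i t) ^ i / Dser d i (δf i t) * u ^ i :=
    Finset.sum_nonneg fun k _ => mul_nonneg (ht k).1 (pow_nonneg hu.le k)
  have e5 : ∑ k ∈ Finset.range n, d k n * (δf n t) ^ k / Dser d n (δf n t) * u ^ k =
      (∑ k ∈ Finset.range n, d k n * (u * δf n t) ^ k) / Dser d n (δf n t) := by
    rw [Finset.sum_div]
    refine Finset.sum_congr rfl fun k _ => ?_
    rw [mul_pow]; ring
  have e6 : (∑ k ∈ Finset.range n, d k n * (u * δf n t) ^ k) / Dser d n (δf n t) ≤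
      (1 / 2) * (Dser d n (u * δf n t) / Dser d n (δf n t)) := by
    rw [← mul_div_assoc]
    exact div_le_div_of_nonneg_right hhalf hD.le
  linarith

lemma ps_ratio (h : PSCond n d δf v Δ) (θ : ℝ) :
    Tendsto (fun t => (v (δf n t))⁻¹ *
      Real.log (Dser d n (Real.exp θ * δf n t) / Dser d n (δf n t))) atTop (𝓝 (Lam Δ θ)) := by
  have h1 := (h.B1_lim _ (Real.exp_pos θ)).comp (h.delta_tendsto n)
  have h2 := (h.B1_lim 1 one_pos).comp (h.delta_tendsto n)
  refine (h1.sub h2).congr' ?_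
  filter_upwards [eventually_gt_atTop 0] with t htp
  have hδ := h.delta_pos n t htp
  have hD := h.D_pos n _ hδ
  have hD2 := h.D_pos n _ (mul_pos (Real.exp_pos θ) hδ)
  simp only [Function.comp, one_mul]
  rw [Real.log_div hD2.ne' hD.ne']; ring

lemma ps_main (h : PSCond n d δf v Δ) :
    (∀ᶠ t in atTop, ∀ k, 0 ≤ pmfN d δf t k) ∧
    (∀ᶠ t in atTop, ∀ θ : ℝ, Summable (fun k : ℕ => pmfN d δf t k * Real.exp (θ * k))) ∧
    (∀ θ b, Lam Δ θ < b → ∀ᶠ t in atTop,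
      ∑' k : ℕ, pmfN d δf t k * Real.exp (θ * k) ≤ Real.exp (v (δf n t) * b)) ∧
    (∀ θ b, b < Lam Δ θ → ∀ᶠ t in atTop,
      Real.exp (v (δf n t) * b) ≤ ∑' k : ℕ, pmfN d δf t k * Real.exp (θ * k)) := by
  obtain ⟨hW1, hW2⟩ := ps_W h
  have hs : Tendsto (fun t => v (δf n t)) atTop atTop := h.v_tendsto.comp (h.delta_tendsto n)
  have hE : ∀ (t θ : ℝ) (k : ℕ), pmfN d δf t k * Real.exp (θ * k) =
      d k k * (δf k t) ^ k / Dser d k (δf k t) * (Real.exp θ) ^ k / Znorm d δf t := by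
    intro t θ k
    rw [← Real.exp_nat_mul, mul_comm (k : ℝ) θ]; unfold pmfN; ring
  have hZ : ∀ᶠ t in atTop, 1 / 2 ≤ Znorm d δf t ∧ Znorm d δf t ≤ 1 := by
    filter_upwards [hW1, hW2 1 one_pos, eventually_gt_atTop 0] with t h1 h2 htp
    have h1 := (h1 1 one_pos).2
    have hD := h.D_pos n _ (h.delta_pos n t htp)
    simp only [one_pow, mul_one, one_mul, div_self hD.ne'] at h1 h2
    exact ⟨h2, h1⟩
  refine ⟨?_, ?_, ?_, ?_⟩
  · filter_upwards [ps_dom h, hZ] with t ht hz k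
    exact div_nonneg (ht k).1 (by linarith [hz.1])
  · filter_upwards [hW1] with t ht θ
    simp only [hE]
    exact (ht _ (Real.exp_pos θ)).1.div_const _
  · intro θ b hb
    obtain ⟨c, hc1, hc2⟩ := exists_between hb
    have h2 : ∀ᶠ t in atTop, 2 ≤ Real.exp (v (δf n t) * (b - c)) :=
      (Real.tendsto_exp_atTop.comp (hs.atTop_mul_const (sub_pos.2 hc2))).eventually_ge_atTop _
    filter_upwards [hW1, hZ, h2, (ps_ratio h θ).eventually_le_const hc1,
      hs.eventually_gt_atTop 0, eventually_gt_atTop 0] with t h1 hz h2 h3 hst htp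
    have hδ := h.delta_pos n t htp
    have hr : 0 < Dser d n (Real.exp θ * δf n t) / Dser d n (δf n t) :=
      div_pos (h.D_pos n _ (mul_pos (Real.exp_pos θ) hδ)) (h.D_pos n _ hδ)
    rw [inv_mul_le_iff₀ hst, Real.log_le_iff_le_exp hr] at h3
    simp only [hE]
    rw [tsum_div_const, div_le_iff₀ (by linarith)]
    have h4 := (h1 _ (Real.exp_pos θ)).2
    have h5 : Real.exp (v (δf n t) * b) =
        Real.exp (v (δf n t) * (b - c)) * Real.exp (v (δf n t) * c) := by
      rw [← Real.exp_add]; congr 1; ring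
    have h6 : 2 * Real.exp (v (δf n t) * c) ≤ Real.exp (v (δf n t) * b) := by
      rw [h5]; gcongr
    have h7 : Real.exp (v (δf n t) * b) * (1 / 2) ≤ Real.exp (v (δf n t) * b) * Znorm d δf t :=
      mul_le_mul_of_nonneg_left hz.1 (Real.exp_pos _).le
    linarith
  · intro θ b hb
    obtain ⟨c, hc1, hc2⟩ := exists_between hb
    have h2 : ∀ᶠ t in atTop, 2 ≤ Real.exp (v (δf n t) * (c - b)) :=
      (Real.tendsto_exp_atTop.comp (hs.atTop_mul_const (sub_pos.2 hc1))).eventually_ge_atTop _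
    filter_upwards [hW2 _ (Real.exp_pos θ), hZ, h2, (ps_ratio h θ).eventually_const_le hc2,
      hs.eventually_gt_atTop 0, eventually_gt_atTop 0] with t h1 hz h2 h3 hst htp
    have hδ := h.delta_pos n t htp
    have hr : 0 < Dser d n (Real.exp θ * δf n t) / Dser d n (δf n t) :=
      div_pos (h.D_pos n _ (mul_pos (Real.exp_pos θ) hδ)) (h.D_pos n _ hδ)
    rw [le_inv_mul_iff₀ hst, Real.le_log_iff_exp_le hr] at h3
    simp only [hE]
    rw [tsum_div_const, le_div_iff₀ (by linarith)]
    have h5 : Real.exp (v (δf n t) * c) =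
        Real.exp (v (δf n t) * (c - b)) * Real.exp (v (δf n t) * b) := by
      rw [← Real.exp_add]; congr 1; ring
    have h6 : 2 * Real.exp (v (δf n t) * b) ≤ Real.exp (v (δf n t) * c) := by
      rw [h5]; gcongr
    have h7 : Real.exp (v (δf n t) * b) * Znorm d δf t ≤ Real.exp (v (δf n t) * b) * 1 :=
      mul_le_mul_of_nonneg_left hz.2 (Real.exp_pos _).le
    linarith

end model

/-- Proposition 3.1: under Conditions (B1), (B2), (B3), the family `N(t)/v(δ(t))` satisfies
the LDP with speed `v(δ(t))` and good rate function `Λ*`. -/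
theorem prop_LD_eventually_constant
    (n : ℕ) (d : ℕ → ℕ → ℝ) (δf : ℕ → ℝ → ℝ) (v Δ : ℝ → ℝ)
    (hcond : PSCond n d δf v Δ)
    (hZsum : ∀ t : ℝ, 0 < t →
      Summable (fun j : ℕ => d j j * (δf j t) ^ j / Dser d j (δf j t)))
    (hZpos : ∀ t : ℝ, 0 < t → 0 < Znorm d δf t) :
    LowerSemicontinuous (LamStar Δ) ∧
    (∀ η : ℝ, 0 ≤ η → IsCompact {x : ℝ | LamStar Δ x ≤ (η : EReal)}) ∧
    (∀ C : Set ℝ, IsClosed C →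
      Filter.limsup
        (fun t : ℝ => (((v (δf n t))⁻¹ : ℝ) : EReal) * elog (probScaled n d δf v t C)) atTop
        ≤ - ⨅ x ∈ C, LamStar Δ x) ∧
    (∀ O : Set ℝ, IsOpen O →
      - ⨅ x ∈ O, LamStar Δ x ≤
        Filter.liminf
          (fun t : ℝ => (((v (δf n t))⁻¹ : ℝ) : EReal) * elog (probScaled n d δf v t O)) atTop) := by
  obtain ⟨hp, hsum, hup, hlo⟩ := ps_main hcond
  have hs : Tendsto (fun t => v (δf n t)) atTop atTop :=
    hcond.v_tendsto.comp (hcond.delta_tendsto n)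
  have hdiff : Differentiable ℝ (Lam Δ) := by
    intro θ
    have := (hcond.Delta_diff _ (Real.exp_pos θ)).comp θ Real.differentiableAt_exp
    exact this.sub_const _
  have hL0 : Lam Δ 0 = 0 := by simp [Lam]
  have hlsc : LowerSemicontinuous (LamStar Δ) := by
    refine lowerSemicontinuous_iSup fun θ => Continuous.lowerSemicontinuous ?_
    exact continuous_coe_real_ereal.comp (by fun_prop)
  have hle : ∀ (x η : ℝ), LamStar Δ x ≤ (η : EReal) → ∀ θ, θ * x - Lam Δ θ ≤ η := by
    intro x η hx θ
    exact EReal.coe_le_coe_iff.1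
      ((le_iSup (fun θ : ℝ => ((θ * x - Lam Δ θ : ℝ) : EReal)) θ).trans hx)
  refine ⟨hlsc, ?_, ?_, ?_⟩
  · intro η _
    refine Metric.isCompact_of_isClosed_isBounded (hlsc.isClosed_preimage (η : EReal)) ?_
    refine (Metric.isBounded_Icc (-(η + Lam Δ (-1))) (η + Lam Δ 1)).subset fun x hx => ?_
    have h1 := hle x η hx 1
    have h2 := hle x η hx (-1)
    constructor <;> linarith
  · intro C hC
    rw [← EReal.le_of_forall_lt_iff_le]
    intro b hb
    obtain ⟨c, hc1, hc2⟩ := EReal.lt_iff_exists_real_btwn.1 hb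
    have hc2 : c < b := EReal.coe_lt_coe_iff.1 hc2
    have hI : ((-c : ℝ) : EReal) < ⨅ x ∈ C, LamStar Δ x := by
      rw [EReal.coe_neg]; exact EReal.neg_lt_comm.1 hc1
    obtain ⟨F, hF⟩ := exists_cover (Lam Δ) C hC (-c) (fun x hx => by
      have h1 : ((-c : ℝ) : EReal) < LamStar Δ x := hI.trans_le (iInf₂_le x hx)
      obtain ⟨θ, hθ⟩ := lt_iSup_iff.1 h1
      exact ⟨θ, EReal.coe_lt_coe_iff.1 hθ⟩)
    have := ge_upper (pmfN d δf) _ (Lam Δ) hs hp hsum hup F C (-c) b (by linarith) hF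
    refine Filter.limsup_le_of_le (by isBoundedDefault) ?_
    filter_upwards [this, hs.eventually_gt_atTop 0] with t ht hst
    exact elog_upper _ _ _ hst ht
  · intro O hO
    rw [EReal.neg_le]
    refine le_iInf₂ fun x hx => ?_
    rw [EReal.neg_le, ← EReal.ge_of_forall_gt_iff_ge]
    intro b hb
    obtain ⟨c, hc1, hc2⟩ := EReal.lt_iff_exists_real_btwn.1 hb
    have hbc : b < c := EReal.coe_lt_coe_iff.1 hc1
    have hm : LamStar Δ x ≤ ((-c : ℝ) : EReal) := by
      rw [EReal.coe_neg]; exact (EReal.lt_neg_comm.1 hc2).le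
    obtain ⟨r, hr, hrO⟩ := Metric.isOpen_iff.1 hO x hx
    obtain ⟨θ, y, hd, hyx, hy⟩ := exists_exposed (Lam Δ) hdiff hL0 x (-c) r hr (hle x _ hm)
    have hyO : y ∈ O := hrO (by rw [Metric.mem_ball, Real.dist_eq]; exact hyx)
    obtain ⟨r', hr', hrO'⟩ := Metric.isOpen_iff.1 hO y hyO
    set ρ := min r' ((c - b) / (2 * (|θ| + 1))) with hρ
    have hθ := abs_nonneg θ
    have hρp : 0 < ρ := lt_min hr' (div_pos (by linarith) (by positivity))
    have hρ2 : |θ| * ρ < c - b := by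
      have h1 : ρ ≤ (c - b) / (2 * (|θ| + 1)) := min_le_right _ _
      rw [le_div_iff₀ (by positivity)] at h1
      nlinarith
    have := ge_lower (pmfN d δf) _ (Lam Δ) hs hp hsum hup hlo θ y ρ b hd hρp (by linarith) O
      ((Metric.ball_subset_ball (min_le_left _ _)).trans hrO')
    refine Filter.le_liminf_of_le (by isBoundedDefault) ?_
    filter_upwards [this, hs.eventually_gt_atTop 0] with t ht hst
    exact elog_lower _ _ _ hst ht
end

section
/- Under Conditions (B1), (B2) and (B3), for every u > 0 one has lim_{t→∞} (1/v(δ(t))) log ( D(δ(t)) · Σ_{k≥0} d_{k,k} (u δ_k(t))^k / D_k(δ_k(t)) ) = Δ(u). -/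
open Filter Topology

/-- Eq. (3.4) in the proof of Proposition 3.1: for all `u > 0`,
`(1/v(δ(t))) log ( D(δ(t)) · Σ_k d_{k,k} (u δ_k(t))^k / D_k(δ_k(t)) ) → Δ(u)` as `t → ∞`. -/
theorem central_extended_limit
    (n : ℕ) (d : ℕ → ℕ → ℝ) (δf : ℕ → ℝ → ℝ) (v Δ : ℝ → ℝ)
    (hcond : PSCond n d δf v Δ) :
    ∀ u : ℝ, 0 < u →
      Tendsto (fun t : ℝ => (v (δf n t))⁻¹ *
          Real.log (Dser d n (δf n t) *
            ∑' k : ℕ, d k k * (u * δf k t) ^ k / Dser d k (δf k t)))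
        atTop (𝓝 (Δ u)) := by
  intro u hu
  obtain ⟨K, hKn, hK⟩ := hcond.B2 n
  rw [hcond.B1_d K hKn] at hK
  set S : ℝ := ∑ k ∈ Finset.range n, d k n with hS
  have hS0 : 0 ≤ S := Finset.sum_nonneg fun k _ => hcond.d_nonneg k n
  set C : ℝ := 1 + S / d K n with hC
  have hC1 : 1 ≤ C := by
    have : 0 ≤ S / d K n := by positivity
    linarith
  have hδ := hcond.delta_tendsto n
  have hr : ∀ k ∈ Finset.range n, ∀ᶠ t in atTop,
      Dser d n (δf n t) * (d k k * (u * δf k t) ^ k / Dser d k (δf k t))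
        ≤ d k n * (u * δf n t) ^ k := by
    intro k hk
    rw [Finset.mem_range] at hk
    rcases (hcond.d_nonneg k n).eq_or_lt with h0 | hpos
    · have := hcond.B3_zero k hk h0.symm
      simp [this, ← h0]
    · filter_upwards [(hcond.B3_lim k hk hpos).eventually (gt_mem_nhds one_pos),
        eventually_gt_atTop 0] with t ht ht0
      have h1 := hcond.delta_pos n t ht0
      have h3 := hcond.D_pos n _ h1
      have h4 : 0 < d k n * (δf n t) ^ k / Dser d n (δf n t) := by positivity
      rw [div_lt_one h4, lt_div_iff₀ h3] at ht
      have h5 : 0 < u ^ k := by positivity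
      calc Dser d n (δf n t) * (d k k * (u * δf k t) ^ k / Dser d k (δf k t))
          = u ^ k * (d k k * δf k t ^ k / Dser d k (δf k t) * Dser d n (δf n t)) := by
            rw [mul_pow]; ring
        _ ≤ u ^ k * (d k n * δf n t ^ k) := mul_le_mul_of_nonneg_left ht.le h5.le
        _ = _ := by rw [mul_pow]; ring
  have hr' := (Filter.eventually_all_finset (Finset.range n)).2 hr
  have hub : ∀ᶠ t in atTop, 1 ≤ u * δf n t :=
    (hδ.const_mul_atTop hu).eventually_ge_atTop 1
  have key : ∀ᶠ t in atTop,
      |Real.log (Dser d n (δf n t) *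
            ∑' k : ℕ, d k k * (u * δf k t) ^ k / Dser d k (δf k t))
        - Real.log (Dser d n (u * δf n t))| ≤ Real.log C := by
    filter_upwards [hr', hub, eventually_gt_atTop 0] with t ht hx ht0
    have hd := hcond.delta_pos n t ht0
    have hD := hcond.D_pos n _ hd
    have hDu := hcond.D_pos n (u * δf n t) (by positivity)
    have hsb := hcond.D_summable n (u * δf n t) (by positivity)
    set b : ℕ → ℝ := fun k => d k n * (u * δf n t) ^ k with hb
    set a : ℕ → ℝ := fun k =>
      Dser d n (δf n t) * (d k k * (u * δf k t) ^ k / Dser d k (δf k t)) with ha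
    have hb0 : ∀ k, 0 ≤ b k := fun k => by
      have := hcond.d_nonneg k n
      simp only [hb]; positivity
    have ha0 : ∀ k, 0 ≤ a k := fun k => by
      have h1 := hcond.d_nonneg k k
      have h2 := hcond.delta_pos k t ht0
      have h3 := hcond.D_pos k _ h2
      simp only [ha]; positivity
    have hge : ∀ k, n ≤ k → a k = b k := fun k hk => by
      have e : Dser d k (δf n t) = Dser d n (δf n t) := by
        unfold Dser
        exact tsum_congr fun i => by rw [hcond.B1_d k hk]
      simp only [ha, hb]
      rw [hcond.B1_delta k hk, e, hcond.B1_d k hk]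
      field_simp
    have hab : ∀ k, a k ≤ b k := fun k => by
      rcases lt_or_ge k n with h | h
      · exact ht k (Finset.mem_range.2 h)
      · exact (hge k h).le
    have hsa : Summable a := Summable.of_nonneg_of_le ha0 hab hsb
    have hF : Dser d n (δf n t) *
            ∑' k : ℕ, d k k * (u * δf k t) ^ k / Dser d k (δf k t) = ∑' k, a k :=
      tsum_mul_left.symm
    have hDb : Dser d n (u * δf n t) = ∑' k, b k := rfl
    rw [hF, hDb]
    rw [hDb] at hDu
    have hle : ∑' k, a k ≤ ∑' k, b k := hsa.tsum_le_tsum hab hsb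
    have hKa : b K ≤ ∑' k, a k := by
      rw [← hge K hKn]
      exact hsa.le_tsum K fun j _ => ha0 j
    have hsplit : ∑' k, b k ≤ ∑ k ∈ Finset.range n, b k + ∑' k, a k := by
      rw [← hsb.sum_add_tsum_nat_add n, ← hsa.sum_add_tsum_nat_add n]
      have h1 : ∑' k, b (k + n) = ∑' k, a (k + n) :=
        tsum_congr fun k => (hge _ (Nat.le_add_left n k)).symm
      have h2 : 0 ≤ ∑ k ∈ Finset.range n, a k := Finset.sum_nonneg fun k _ => ha0 k
      rw [h1]; linarith
    have hfin : ∑ k ∈ Finset.range n, b k ≤ S / d K n * b K := by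
      have : S / d K n * b K = S * (u * δf n t) ^ K := by
        simp only [hb]; field_simp
      rw [this, hS, Finset.sum_mul]
      refine Finset.sum_le_sum fun k hk => ?_
      have hk := Finset.mem_range.1 hk
      exact mul_le_mul_of_nonneg_left (pow_le_pow_right₀ hx (by omega)) (hcond.d_nonneg k n)
    have hup : ∑' k, b k ≤ C * ∑' k, a k := by
      have : S / d K n * b K ≤ S / d K n * ∑' k, a k :=
        mul_le_mul_of_nonneg_left hKa (by positivity)
      rw [hC, add_mul, one_mul]; linarith
    have hbK : 0 < b K := by simp only [hb]; positivity
    have hapos : 0 < ∑' k, a k := hbK.trans_le hKa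
    have l1 := Real.log_le_log hapos hle
    have l2 := Real.log_le_log hDu hup
    rw [Real.log_mul (by linarith) hapos.ne'] at l2
    rw [abs_le]
    constructor <;> linarith [Real.log_nonneg hC1]
  have hv : Tendsto (fun t => (v (δf n t))⁻¹) atTop (𝓝 0) :=
    (hcond.v_tendsto.comp hδ).inv_tendsto_atTop
  have hmain := (hcond.B1_lim u hu).comp hδ
  have herr : Tendsto (fun t => (v (δf n t))⁻¹ * (Real.log (Dser d n (δf n t) *
            ∑' k : ℕ, d k k * (u * δf k t) ^ k / Dser d k (δf k t))
        - Real.log (Dser d n (u * δf n t)))) atTop (𝓝 0) := by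
    apply squeeze_zero_norm' (a := fun t => |(v (δf n t))⁻¹| * Real.log C)
    · filter_upwards [key] with t ht
      rw [Real.norm_eq_abs, abs_mul]
      exact mul_le_mul_of_nonneg_left ht (abs_nonneg _)
    · simpa using hv.abs.mul_const (Real.log C)
  have := hmain.add herr
  rw [add_zero] at this
  refine this.congr fun t => ?_
  simp only [Function.comp]
  ring
end

section
/- Under Conditions (B1), (B2) and (B3), for every θ ∈ ℝ one has lim_{t→∞} (1/v(δ(t))) log E[e^{θ N(t)}] = Λ(θ), where Λ(θ) = Δ(e^θ) − Δ(1). -/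
open Filter Topology

theorem key_lim (n : ℕ) (d : ℕ → ℕ → ℝ) (δf : ℕ → ℝ → ℝ) (v Δ : ℝ → ℝ)
    (h : PSCond n d δf v Δ) (u : ℝ) (hu : 0 < u) :
    Tendsto (fun t : ℝ => (v (δf n t))⁻¹ * Real.log (∑' k : ℕ, Dser d n (δf n t) *
      (u ^ k * (d k k * (δf k t) ^ k / Dser d k (δf k t))))) atTop (𝓝 (Δ u)) ∧
    ∀ᶠ t in atTop, 0 < ∑' k : ℕ, Dser d n (δf n t) *
      (u ^ k * (d k k * (δf k t) ^ k / Dser d k (δf k t))) := by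
  have hδ := h.delta_tendsto n
  have hv : Tendsto (fun t => v (δf n t)) atTop atTop := h.v_tendsto.comp hδ
  have h1 : Tendsto (fun t => (v (δf n t))⁻¹ * Real.log (Dser d n (u * δf n t))) atTop
      (𝓝 (Δ u)) := (h.B1_lim u hu).comp hδ
  have h2 : Tendsto (fun t => (v (δf n t))⁻¹ * Real.log (Dser d n (u * δf n t))
      - (v (δf n t))⁻¹ * Real.log 2) atTop (𝓝 (Δ u)) := by
    simpa using h1.sub ((tendsto_inv_atTop_zero.comp hv).mul_const (Real.log 2))
  obtain ⟨m, hm, hdm⟩ := h.B2 n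
  rw [h.B1_d m hm m] at hdm
  have hpoly : ∀ᶠ x : ℝ in atTop, ∑ k ∈ Finset.range n, d k n * x ^ k ≤ d m n * x ^ m := by
    have ho : (fun x : ℝ => ∑ k ∈ Finset.range n, d k n * x ^ k) =o[atTop] fun x => x ^ m := by
      simp only [← Finset.sum_fn]
      apply Asymptotics.IsLittleO.sum
      intro k hk
      exact (Asymptotics.isLittleO_pow_pow_atTop_of_lt
        (lt_of_lt_of_le (Finset.mem_range.1 hk) hm)).const_mul_left _
    filter_upwards [ho.bound hdm, eventually_gt_atTop 0] with x hx hx0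
    rw [Real.norm_eq_abs, Real.norm_eq_abs, abs_of_pos (pow_pos hx0 m)] at hx
    exact (le_abs_self _).trans hx
  have hpoly' := (hδ.const_mul_atTop hu).eventually hpoly
  have hr : ∀ᶠ t in atTop, ∀ k ∈ Finset.range n,
      Dser d n (δf n t) * (u ^ k * (d k k * (δf k t) ^ k / Dser d k (δf k t)))
        ≤ d k n * (u * δf n t) ^ k := by
    rw [Filter.eventually_all_finset]
    intro k hk
    have hk := Finset.mem_range.1 hk
    rcases (h.d_nonneg k n).eq_or_lt with h0 | h0
    · refine Eventually.of_forall fun t => ?_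
      rw [h.B3_zero k hk h0.symm, ← h0]; simp
    · filter_upwards [(h.B3_lim k hk h0).eventually_le_const one_pos,
        eventually_gt_atTop 0] with t ht ht0
      have hs := h.delta_pos n t ht0
      have hD := h.D_pos n _ hs
      rw [div_le_one (by positivity), le_div_iff₀ hD] at ht
      calc _ = u ^ k * (d k k * (δf k t) ^ k / Dser d k (δf k t) * Dser d n (δf n t)) := by ring
        _ ≤ u ^ k * (d k n * (δf n t) ^ k) := by gcongr
        _ = _ := by ring
  have hmain : ∀ᶠ t in atTop, 0 < Dser d n (u * δf n t) ∧ Dser d n (u * δf n t) / 2 ≤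
      ∑' k : ℕ, Dser d n (δf n t) * (u ^ k * (d k k * (δf k t) ^ k / Dser d k (δf k t))) ∧
      ∑' k : ℕ, Dser d n (δf n t) * (u ^ k * (d k k * (δf k t) ^ k / Dser d k (δf k t)))
        ≤ Dser d n (u * δf n t) := by
    filter_upwards [hpoly', hr, eventually_gt_atTop 0] with t hp hr ht
    have hs := h.delta_pos n t ht
    have hD := h.D_pos n _ hs
    have hus : 0 < u * δf n t := by positivity
    have hG := h.D_summable n _ hus
    set F : ℕ → ℝ := fun k =>
      Dser d n (δf n t) * (u ^ k * (d k k * (δf k t) ^ k / Dser d k (δf k t))) with hFdef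
    have hFG : ∀ k, n ≤ k → F k = d k n * (u * δf n t) ^ k := by
      intro k hk
      have hDk : Dser d k (δf n t) = Dser d n (δf n t) := by
        simp only [Dser, h.B1_d k hk]
      simp only [hFdef, h.B1_delta k hk, h.B1_d k hk, hDk]
      field_simp
      ring
    have hF0 : ∀ k, 0 ≤ F k := by
      intro k
      have := h.d_nonneg k k
      have := h.delta_pos k t ht
      have := h.D_pos k _ this
      simp only [hFdef]; positivity
    have hle : ∀ k, F k ≤ d k n * (u * δf n t) ^ k := by
      intro k
      rcases lt_or_ge k n with hk | hk
      · exact hr k (Finset.mem_range.2 hk)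
      · exact (hFG k hk).le
    have hFs : Summable F := Summable.of_nonneg_of_le hF0 hle hG
    refine ⟨h.D_pos n _ hus, ?_, hFs.tsum_le_tsum hle hG⟩
    have e1 := hG.sum_add_tsum_nat_add n
    have e2 := hFs.sum_add_tsum_nat_add n
    have e3 : ∑' i, F (i + n) = ∑' i, d (i + n) n * (u * δf n t) ^ (i + n) :=
      tsum_congr fun i => hFG _ (by omega)
    have e4 : 0 ≤ ∑ i ∈ Finset.range n, F i := Finset.sum_nonneg fun i _ => hF0 i
    have e5 : d m n * (u * δf n t) ^ m ≤ ∑' i, d (i + n) n * (u * δf n t) ^ (i + n) := by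
      have := ((summable_nat_add_iff n).2 hG).le_tsum (m - n)
        (fun j _ => mul_nonneg (h.d_nonneg _ _) (by positivity))
      simpa [Nat.sub_add_cancel hm] using this
    have e6 : Dser d n (u * δf n t) = ∑' k, d k n * (u * δf n t) ^ k := rfl
    linarith
  refine ⟨?_, ?_⟩
  · refine tendsto_of_tendsto_of_tendsto_of_le_of_le' h2 h1 ?_ ?_
    · filter_upwards [hmain, eventually_gt_atTop 0] with t ⟨a, b, c⟩ ht
      have hvp := h.v_pos _ (h.delta_pos n t ht)
      rw [← mul_sub, ← Real.log_div a.ne' two_ne_zero]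
      gcongr
    · filter_upwards [hmain, eventually_gt_atTop 0] with t ⟨a, b, c⟩ ht
      have hvp := h.v_pos _ (h.delta_pos n t ht)
      have : 0 < ∑' k : ℕ, Dser d n (δf n t) *
        (u ^ k * (d k k * (δf k t) ^ k / Dser d k (δf k t))) := by linarith
      gcongr
  · filter_upwards [hmain] with t ⟨a, b, c⟩
    linarith

/-- Limit (3.3) in the proof of Proposition 3.1: for all `θ ∈ ℝ`,
`(1/v(δ(t))) log E[e^{θ N(t)}] → Λ(θ) = Δ(e^θ) - Δ(1)` as `t → ∞`. -/
theorem limit_log_mgf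
    (n : ℕ) (d : ℕ → ℕ → ℝ) (δf : ℕ → ℝ → ℝ) (v Δ : ℝ → ℝ)
    (hcond : PSCond n d δf v Δ)
    (hZsum : ∀ t : ℝ, 0 < t →
      Summable (fun j : ℕ => d j j * (δf j t) ^ j / Dser d j (δf j t)))
    (hZpos : ∀ t : ℝ, 0 < t → 0 < Znorm d δf t) :
    ∀ θ : ℝ,
      Tendsto (fun t : ℝ => (v (δf n t))⁻¹ *
          Real.log (∑' k : ℕ, Real.exp (θ * (k : ℝ)) * pmfN d δf t k))
        atTop (𝓝 (Lam Δ θ)) := by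
  intro θ
  obtain ⟨a1, b1⟩ := key_lim n d δf v Δ hcond (Real.exp θ) (Real.exp_pos θ)
  obtain ⟨a2, b2⟩ := key_lim n d δf v Δ hcond 1 one_pos
  refine (a1.sub a2).congr' ?_
  filter_upwards [b1, b2, eventually_gt_atTop 0] with t c1 c2 ht
  have hD := hcond.D_pos n _ (hcond.delta_pos n t ht)
  rw [← mul_sub, ← Real.log_div c1.ne' c2.ne', tsum_mul_left, tsum_mul_left,
    mul_div_mul_left _ _ hD.ne']
  congr 2
  simp only [one_pow, one_mul, pmfN, ← mul_div_assoc, tsum_div_const]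
  simp only [Znorm, ← Real.exp_nat_mul, mul_comm θ]
end

section
/- Under Conditions (B1), (B2) and (B3), for every u > 0 one has lim_{t→∞} R_n(u,t) · D(δ(t)) / D(uδ(t)) = 0. -/
open Filter Topology

theorem aux_term (n : ℕ) (d : ℕ → ℕ → ℝ) (δf : ℕ → ℝ → ℝ) (v Δ : ℝ → ℝ)
    (hcond : PSCond n d δf v Δ) (k : ℕ) (hk : k < n) :
    Tendsto (fun x : ℝ => d k n * x ^ k / Dser d n x) atTop (𝓝 0) := by
  obtain ⟨m, hm, hpos⟩ := hcond.B2 n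
  rw [hcond.B1_d m hm m] at hpos
  have h1 : Tendsto (fun x : ℝ => (d k n / d m n) * (x ^ (m - k))⁻¹) atTop (𝓝 0) := by
    have : Tendsto (fun x : ℝ => (x ^ (m - k))⁻¹) atTop (𝓝 0) :=
      (tendsto_pow_atTop (by omega)).inv_tendsto_atTop
    simpa using this.const_mul (d k n / d m n)
  refine tendsto_of_tendsto_of_tendsto_of_le_of_le' tendsto_const_nhds h1 ?_ ?_
  · filter_upwards [eventually_gt_atTop 0] with x hx
    have := hcond.D_pos n x hx
    have := hcond.d_nonneg k n
    positivity
  · filter_upwards [eventually_gt_atTop 0] with x hx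
    have hle : d m n * x ^ m ≤ Dser d n x :=
      (hcond.D_summable n x hx).le_tsum m
        (fun j _ => mul_nonneg (hcond.d_nonneg j n) (pow_nonneg hx.le j))
    have h0 := hcond.d_nonneg k n
    calc d k n * x ^ k / Dser d n x ≤ d k n * x ^ k / (d m n * x ^ m) := by gcongr
      _ = _ := by
        have : x ^ m = x ^ (m - k) * x ^ k := by rw [← pow_add]; congr 1; omega
        rw [this]
        field_simp

/-- Eq. (3.6) in the paper: under Conditions (B1), (B2), (B3), for all `u > 0`,
`R_n(u,t) · D(δ(t))/D(uδ(t)) → 0` as `t → ∞`. -/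
theorem Rn_ratio_limit
    (n : ℕ) (d : ℕ → ℕ → ℝ) (δf : ℕ → ℝ → ℝ) (v Δ : ℝ → ℝ)
    (hcond : PSCond n d δf v Δ) :
    ∀ u : ℝ, 0 < u →
      Tendsto (fun t : ℝ => Rfun n d δf u t * Dser d n (δf n t) / Dser d n (u * δf n t))
        atTop (𝓝 0) := by
  intro u hu
  have hx : Tendsto (fun t => u * δf n t) atTop atTop :=
    (hcond.delta_tendsto n).const_mul_atTop hu
  have key : ∀ k ∈ Finset.range n, Tendsto (fun t : ℝ =>
      (d k k * (u * δf k t) ^ k / Dser d k (δf k t)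
        - d k n * (u * δf n t) ^ k / Dser d n (δf n t))
        * (Dser d n (δf n t) / Dser d n (u * δf n t))) atTop (𝓝 0) := by
    intro k hk
    have hk := Finset.mem_range.mp hk
    rcases (hcond.d_nonneg k n).eq_or_lt with h0 | h0
    · simp [hcond.B3_zero k hk h0.symm, ← h0]
    · have hA := (aux_term n d δf v Δ hcond k hk).comp hx
      have hB := ((hcond.B3_lim k hk h0).sub_const 1).mul hA
      rw [mul_zero] at hB
      refine hB.congr' ?_
      filter_upwards [eventually_gt_atTop 0] with t ht
      have p1 := hcond.delta_pos n t ht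
      have p2 := hcond.D_pos n _ p1
      have p3 := hcond.D_pos n _ (mul_pos hu p1)
      have p4 := hcond.D_pos k _ (hcond.delta_pos k t ht)
      simp only [Function.comp]
      generalize Dser d n (u * δf n t) = a at *
      generalize Dser d n (δf n t) = b at *
      generalize Dser d k (δf k t) = c at *
      simp only [mul_pow]
      field_simp
  have := tendsto_finset_sum _ key
  simp only [Finset.sum_const_zero] at this
  refine this.congr fun t => ?_
  rw [Rfun, ← Finset.sum_mul, mul_div_assoc]
end

section
/- Under Conditions (B1), (B2) and (B3), for every u > 0 one has lim_{t→∞} R_n(u,t) = 0. -/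
open Filter Topology

/-- Eq. (2.4) in the paper (Remark 3.1): under Conditions (B1), (B2), (B3), for all `u > 0`,
`R_n(u,t) → 0` as `t → ∞`. -/
theorem Rn_limit
    (n : ℕ) (d : ℕ → ℕ → ℝ) (δf : ℕ → ℝ → ℝ) (v Δ : ℝ → ℝ)
    (hcond : PSCond n d δf v Δ) :
    ∀ u : ℝ, 0 < u → Tendsto (fun t : ℝ => Rfun n d δf u t) atTop (𝓝 0) := by
  intro u hu
  obtain ⟨m, hm, hdm⟩ := hcond.B2 (n + 1)
  have hdm' : 0 < d m n := by
    rw [← hcond.B1_d m (by omega) m]; exact hdm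
  have hg : ∀ k, k < n →
      Tendsto (fun t : ℝ => d k n * (δf n t) ^ k / Dser d n (δf n t)) atTop (𝓝 0) := by
    intro k hk
    have hlim : Tendsto (fun t : ℝ => (d k n / d m n) * ((δf n t) ^ (m - k))⁻¹) atTop (𝓝 0) := by
      have h1 : Tendsto (fun t : ℝ => (δf n t) ^ (m - k)) atTop atTop :=
        (tendsto_pow_atTop (by omega)).comp (hcond.delta_tendsto n)
      simpa using (tendsto_inv_atTop_zero.comp h1).const_mul (d k n / d m n)
    refine squeeze_zero' ?_ ?_ hlim
    · filter_upwards [eventually_gt_atTop 0] with t ht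
      have h := hcond.delta_pos n t ht
      have h2 := hcond.D_pos n _ h
      have h3 := hcond.d_nonneg k n
      positivity
    · filter_upwards [eventually_gt_atTop 0] with t ht
      have h := hcond.delta_pos n t ht
      have h3 := hcond.d_nonneg k n
      have hle : d m n * (δf n t) ^ m ≤ Dser d n (δf n t) :=
        (hcond.D_summable n _ h).le_tsum m
          (fun j _ => mul_nonneg (hcond.d_nonneg j n) (by positivity))
      have hmk : (δf n t) ^ m = (δf n t) ^ (m - k) * (δf n t) ^ k := by
        rw [← pow_add]; congr 1; omega
      calc d k n * (δf n t) ^ k / Dser d n (δf n t)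
          ≤ d k n * (δf n t) ^ k / (d m n * (δf n t) ^ m) := by gcongr
        _ = (d k n / d m n) * ((δf n t) ^ (m - k))⁻¹ := by
            rw [hmk]; field_simp
  have hf : ∀ k, k < n →
      Tendsto (fun t : ℝ => d k k * (δf k t) ^ k / Dser d k (δf k t)) atTop (𝓝 0) := by
    intro k hk
    rcases (hcond.d_nonneg k n).eq_or_lt with h0 | hpos
    · simp [hcond.B3_zero k hk h0.symm]
    · have h := (hcond.B3_lim k hk hpos).mul (hg k hk)
      rw [mul_zero] at h
      refine h.congr' ?_
      filter_upwards [eventually_gt_atTop 0] with t ht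
      have h1 := hcond.delta_pos n t ht
      have h2 := hcond.D_pos n _ h1
      exact div_mul_cancel₀ _ (by positivity)
  have key : Tendsto (fun t : ℝ => Rfun n d δf u t) atTop
      (𝓝 (∑ k ∈ Finset.range n, (0 : ℝ))) := by
    unfold Rfun
    refine tendsto_finsetSum _ fun k hk => ?_
    have hk' := Finset.mem_range.1 hk
    have h := ((hf k hk').sub (hg k hk')).const_mul (u ^ k)
    rw [sub_zero, mul_zero] at h
    refine h.congr fun t => ?_
    rw [mul_pow, mul_pow]; ring
  simpa using key
end

section
/- Assume Conditions (B1), (B2), (B3), that Δ is twice differentiable at 1 (so Λ''(0) exists), and the boundedness hypotheses (i), (ii), (iii). Then for every family of positive numbers {a(t) : t > 0} with a(t) → 0 and v(δ(t))·a(t) → ∞ as t → ∞, the family of random variables {(N(t) − E[N(t)]) · √(v(δ(t)) a(t)) / v(δ(t)) : t > 0} satisfies the large deviation principle with speed 1/a(t) and good rate function Λ̃* given by Λ̃*(x) = x²/(2Λ''(0)) if Λ''(0) > 0, and, if Λ''(0) = 0, Λ̃*(0) = 0 and Λ̃*(x) = ∞ for x ≠ 0; i.e. limsup_{t→∞} a(t)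 log P(X_t ∈ C) ≤ −inf_C Λ̃* for every closed C ⊆ ℝ and liminf_{t→∞} a(t) log P(X_t ∈ O) ≥ −inf_O Λ̃* for every open O ⊆ ℝ, where X_t := (N(t) − E[N(t)]) √(v(δ(t)) a(t)) / v(δ(t)). -/
open Filter Topology

/-- The moderate deviations rate function `Λ̃*` (with `c = Λ''(0)`):
`x²/(2c)` when `c > 0`; the indicator-type rate when `c = 0`. -/
noncomputable def tildeStar (c : ℝ) (x : ℝ) : EReal :=
  if 0 < c then (((x ^ 2 / (2 * c)) : ℝ) : EReal)
  else (if x = 0 then (0 : EReal) else ⊤)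

/-- `P( (N(t) - E[N(t)]) √(v(δ(t)) a(t)) / v(δ(t)) ∈ S )`. -/
noncomputable def probMD (n : ℕ) (d : ℕ → ℕ → ℝ) (δf : ℕ → ℝ → ℝ) (v a : ℝ → ℝ)
    (t : ℝ) (S : Set ℝ) : ℝ :=
  ∑' k : ℕ, S.indicator (fun _ => pmfN d δf t k)
    (((k : ℝ) - meanN d δf t) * Real.sqrt (v (δf n t) * a t) / v (δf n t))

lemma aux_elog_le {a P x : ℝ} (ha : 0 < a) (h : P ≤ Real.exp (x / a)) :
    (a : EReal) * elog P ≤ (x : EReal) := by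
  unfold elog
  split_ifs with h0
  · rw [EReal.coe_mul_bot_of_pos ha]; exact bot_le
  · push Not at h0
    rw [← EReal.coe_mul, EReal.coe_le_coe_iff]
    have := (Real.log_le_iff_le_exp h0).2 h
    rw [le_div_iff₀ ha] at this
    linarith

lemma aux_le_elog {a P x : ℝ} (ha : 0 < a) (h : Real.exp (x / a) ≤ P) :
    (x : EReal) ≤ (a : EReal) * elog P := by
  have h0 : 0 < P := (Real.exp_pos _).trans_le h
  unfold elog
  rw [if_neg (not_le.2 h0), ← EReal.coe_mul, EReal.coe_le_coe_iff]
  have := (Real.le_log_iff_exp_le h0).2 h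
  rw [div_le_iff₀ ha] at this
  linarith

lemma aux_ind_summable {p X : ℕ → ℝ} (hp : ∀ k, 0 ≤ p k) (hs : Summable p) (S : Set ℝ) :
    Summable (fun k => S.indicator (fun _ => p k) (X k)) := by
  refine Summable.of_nonneg_of_le (fun k => Set.indicator_nonneg (fun _ _ => hp k) _) (fun k => ?_) hs
  by_cases h : X k ∈ S <;> simp [h, hp k]

lemma aux_U {p X : ℕ → ℝ} {a l ρ : ℝ} (ha : 0 < a) (hl : 0 ≤ l)
    (hp : ∀ k, 0 ≤ p k) (hs : Summable p)
    (h1 : Summable (fun k => p k * Real.exp (l * X k / a)))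
    (h2 : Summable (fun k => p k * Real.exp (-l * X k / a)))
    (C : Set ℝ) (hC : ∀ x ∈ C, ρ ≤ |x|) :
    ∑' k, C.indicator (fun _ => p k) (X k) ≤
      Real.exp (-(l * ρ) / a) * (∑' k, p k * Real.exp (l * X k / a) +
        ∑' k, p k * Real.exp (-l * X k / a)) := by
  rw [← h1.tsum_add h2, ← tsum_mul_left]
  refine Summable.tsum_le_tsum (fun k => ?_) (aux_ind_summable hp hs C) ((h1.add h2).mul_left _)
  have e : ∀ y : ℝ, Real.exp (-(l * ρ) / a) * (p k * Real.exp (y / a)) =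
      p k * Real.exp ((y - l * ρ) / a) := by
    intro y
    rw [show (y - l * ρ) / a = -(l * ρ) / a + y / a by ring, Real.exp_add]; ring
  rw [mul_add, e, e]
  have q1 : 0 ≤ p k * Real.exp ((l * X k - l * ρ) / a) := mul_nonneg (hp k) (Real.exp_pos _).le
  have q2 : 0 ≤ p k * Real.exp ((-l * X k - l * ρ) / a) := mul_nonneg (hp k) (Real.exp_pos _).le
  by_cases h : X k ∈ C
  · rw [Set.indicator_of_mem h]
    rcases le_abs.1 (hC _ h) with h' | h'
    · have : p k * 1 ≤ p k * Real.exp ((l * X k - l * ρ) / a) := by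
        refine mul_le_mul_of_nonneg_left (Real.one_le_exp (div_nonneg ?_ ha.le)) (hp k)
        nlinarith
      linarith
    · have : p k * 1 ≤ p k * Real.exp ((-l * X k - l * ρ) / a) := by
        refine mul_le_mul_of_nonneg_left (Real.one_le_exp (div_nonneg ?_ ha.le)) (hp k)
        nlinarith
      linarith
  · rw [Set.indicator_of_notMem h]; linarith

lemma aux_L {p X : ℕ → ℝ} {a l μ x ρ : ℝ} (ha : 0 < a) (hμ : 0 ≤ μ)
    (hp : ∀ k, 0 ≤ p k) (hs : Summable p)
    (h0 : Summable (fun k => p k * Real.exp (l * X k / a)))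
    (h1 : Summable (fun k => p k * Real.exp ((l + μ) * X k / a)))
    (h2 : Summable (fun k => p k * Real.exp ((l - μ) * X k / a)))
    (O : Set ℝ) (hO : ∀ y, |y - x| < ρ → y ∈ O) :
    ∑' k, p k * Real.exp (l * X k / a) ≤
      Real.exp ((l * x + |l| * ρ) / a) * ∑' k, O.indicator (fun _ => p k) (X k) +
      Real.exp (-(μ * (x + ρ)) / a) * ∑' k, p k * Real.exp ((l + μ) * X k / a) +
      Real.exp ((μ * (x - ρ)) / a) * ∑' k, p k * Real.exp ((l - μ) * X k / a) := by
  have hi := aux_ind_summable (X := X) hp hs O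
  rw [← tsum_mul_left, ← tsum_mul_left, ← tsum_mul_left,
    ← (hi.mul_left _).tsum_add (h1.mul_left _),
    ← ((hi.mul_left _).add (h1.mul_left _)).tsum_add (h2.mul_left _)]
  refine Summable.tsum_le_tsum (fun k => ?_) h0
    (((hi.mul_left _).add (h1.mul_left _)).add (h2.mul_left _))
  have e : ∀ z y : ℝ, Real.exp (z / a) * (p k * Real.exp (y / a)) =
      p k * Real.exp ((z + y) / a) := by
    intro z y
    rw [add_div, Real.exp_add]; ring
  rw [e, e]
  have q0 : 0 ≤ Real.exp ((l * x + |l| * ρ) / a) * O.indicator (fun _ => p k) (X k) :=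
    mul_nonneg (Real.exp_pos _).le (Set.indicator_nonneg (fun _ _ => hp k) _)
  have q1 : 0 ≤ p k * Real.exp ((-(μ * (x + ρ)) + (l + μ) * X k) / a) :=
    mul_nonneg (hp k) (Real.exp_pos _).le
  have q2 : 0 ≤ p k * Real.exp ((μ * (x - ρ) + (l - μ) * X k) / a) :=
    mul_nonneg (hp k) (Real.exp_pos _).le
  have key : ∀ y z : ℝ, y ≤ z → p k * Real.exp (y / a) ≤ p k * Real.exp (z / a) := by
    intro y z h
    exact mul_le_mul_of_nonneg_left (Real.exp_le_exp.2 (div_le_div_of_nonneg_right h ha.le)) (hp k)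
  by_cases h : |X k - x| < ρ
  · rw [Set.indicator_of_mem (hO _ h)] at *
    have := key (l * X k) (l * x + |l| * ρ) (by
      have h3 : l * (X k - x) ≤ |l| * ρ :=
        (le_abs_self _).trans (by rw [abs_mul]; exact mul_le_mul_of_nonneg_left h.le (abs_nonneg _))
      linarith)
    rw [mul_comm (Real.exp _) (p k)] at *
    linarith
  · push Not at h
    rcases le_abs.1 h with h' | h'
    · have := key (l * X k) (-(μ * (x + ρ)) + (l + μ) * X k) (by nlinarith)
      linarith
    · have := key (l * X k) (μ * (x - ρ) + (l - μ) * X k) (by nlinarith)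
      linarith

lemma aux_upper {p X : ℝ → ℕ → ℝ} {a : ℝ → ℝ} {c l ρ r : ℝ}
    (ha : ∀ᶠ t in atTop, 0 < a t) (ha0 : Tendsto a atTop (𝓝 0))
    (hp : ∀ᶠ t in atTop, ∀ k, 0 ≤ p t k) (hs : ∀ᶠ t in atTop, Summable (p t))
    (hsum : ∀ l : ℝ, ∀ᶠ t in atTop, Summable (fun k => p t k * Real.exp (l * X t k / a t)))
    (hF : ∀ l : ℝ, Tendsto (fun t => a t * Real.log (∑' k, p t k * Real.exp (l * X t k / a t)))
      atTop (𝓝 (c * l ^ 2 / 2)))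
    (hl : 0 ≤ l) (C : Set ℝ) (hC : ∀ x ∈ C, ρ ≤ |x|) (hr : r < l * ρ - c * l ^ 2 / 2) :
    limsup (fun t => (a t : EReal) * elog (∑' k, C.indicator (fun _ => p t k) (X t k))) atTop
      ≤ ((-r : ℝ) : EReal) := by
  refine limsup_le_of_le (by isBoundedDefault) ?_
  obtain ⟨ε, hε⟩ : ∃ ε, ε = (l * ρ - c * l ^ 2 / 2 - r) / 2 := ⟨_, rfl⟩
  have hε0 : 0 < ε := by rw [hε]; linarith
  have f1 := (hF l).eventually (gt_mem_nhds (show c * l ^ 2 / 2 < c * l ^ 2 / 2 + ε by linarith))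
  have f2 := (hF (-l)).eventually (gt_mem_nhds (show c * (-l) ^ 2 / 2 < c * l ^ 2 / 2 + ε by
    rw [neg_sq]; linarith))
  have f3 := (ha0.mul_const (Real.log 2)).eventually
    (gt_mem_nhds (show 0 * Real.log 2 < ε by linarith))
  filter_upwards [ha, hp, hs, hsum l, hsum (-l), f1, f2, f3] with t a0 p0 s0 s1 s2 f1 f2 f3
  apply aux_elog_le a0
  refine (aux_U a0 hl p0 s0 s1 s2 C hC).trans ?_
  have k : ∀ M y : ℝ, a t * Real.log M < y → M ≤ Real.exp (y / a t) := by
    intro M y h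
    refine (Real.le_exp_log M).trans (Real.exp_le_exp.2 ?_)
    rw [le_div_iff₀ a0]; linarith
  have g1 := k _ _ f1
  have g2 := k _ _ f2
  have g3 : 2 ≤ Real.exp (ε / a t) := k 2 ε f3
  calc _ ≤ Real.exp (-(l * ρ) / a t) * (2 * Real.exp ((c * l ^ 2 / 2 + ε) / a t)) := by
        refine mul_le_mul_of_nonneg_left ?_ (Real.exp_pos _).le
        linarith
    _ ≤ Real.exp (-(l * ρ) / a t) * (Real.exp (ε / a t) * Real.exp ((c * l ^ 2 / 2 + ε) / a t)) := by
        gcongr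
    _ = Real.exp (-r / a t) := by
        rw [← Real.exp_add, ← Real.exp_add, ← add_div, ← add_div, hε]
        congr 2; ring

lemma aux_lower {p X : ℝ → ℕ → ℝ} {a : ℝ → ℝ} {c l x r : ℝ} (hc : 0 ≤ c)
    (ha : ∀ᶠ t in atTop, 0 < a t) (ha0 : Tendsto a atTop (𝓝 0))
    (hp : ∀ᶠ t in atTop, ∀ k, 0 ≤ p t k) (hs : ∀ᶠ t in atTop, Summable (p t))
    (hsum : ∀ l : ℝ, ∀ᶠ t in atTop, Summable (fun k => p t k * Real.exp (l * X t k / a t)))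
    (hpos : ∀ l : ℝ, ∀ᶠ t in atTop, 0 < ∑' k, p t k * Real.exp (l * X t k / a t))
    (hF : ∀ l : ℝ, Tendsto (fun t => a t * Real.log (∑' k, p t k * Real.exp (l * X t k / a t)))
      atTop (𝓝 (c * l ^ 2 / 2)))
    (O : Set ℝ) (hO : IsOpen O) (hxO : x ∈ O) (hx : x = c * l) (hr : r < - (c * l ^ 2 / 2)) :
    (r : EReal) ≤
      liminf (fun t => (a t : EReal) * elog (∑' k, O.indicator (fun _ => p t k) (X t k))) atTop := by
  refine le_liminf_of_le (by isBoundedDefault) ?_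
  obtain ⟨ρ0, hρ0, hb⟩ := Metric.isOpen_iff.1 hO x hxO
  obtain ⟨G, hG⟩ : ∃ G, G = - (c * l ^ 2 / 2) - r := ⟨_, rfl⟩
  have hG0 : 0 < G := by rw [hG]; linarith
  obtain ⟨ρ, hρ⟩ : ∃ ρ, ρ = min ρ0 (G / (2 * (|l| + 1))) := ⟨_, rfl⟩
  have hl1 : 0 < |l| + 1 := by positivity
  have hρp : 0 < ρ := by rw [hρ]; positivity
  have hρl : |l| * ρ ≤ G / 2 := by
    have : ρ ≤ G / (2 * (|l| + 1)) := hρ ▸ min_le_right _ _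
    rw [le_div_iff₀ (by positivity)] at this
    nlinarith
  have hb' : ∀ y, |y - x| < ρ → y ∈ O := fun y hy => hb (by
    rw [Metric.mem_ball, Real.dist_eq]; exact hy.trans_le (hρ ▸ min_le_left _ _))
  obtain ⟨μ, hμ⟩ : ∃ μ, μ = ρ / (c + 1) := ⟨_, rfl⟩
  have hμp : 0 < μ := by rw [hμ]; positivity
  have hμρ : 0 < μ * ρ - c * μ ^ 2 / 2 := by
    have : μ * (c + 1) = ρ := by rw [hμ]; field_simp
    rw [← this]
    have := mul_pos hμp hμp
    have := mul_nonneg hc this.le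
    nlinarith
  obtain ⟨ε, hε⟩ : ∃ ε, ε = min (G / 4) ((μ * ρ - c * μ ^ 2 / 2) / 3) := ⟨_, rfl⟩
  have hε0 : 0 < ε := by rw [hε]; positivity
  have hε1 : 4 * ε ≤ G := by have : ε ≤ G / 4 := hε ▸ min_le_left _ _; linarith
  have hε2 : 3 * ε ≤ μ * ρ - c * μ ^ 2 / 2 := by
    have : ε ≤ (μ * ρ - c * μ ^ 2 / 2) / 3 := hε ▸ min_le_right _ _
    linarith
  have f0 := (hF l).eventually (lt_mem_nhds (show c * l ^ 2 / 2 - ε < c * l ^ 2 / 2 by linarith))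
  have f1 := (hF (l + μ)).eventually
    (gt_mem_nhds (show c * (l + μ) ^ 2 / 2 < c * (l + μ) ^ 2 / 2 + ε by linarith))
  have f2 := (hF (l - μ)).eventually
    (gt_mem_nhds (show c * (l - μ) ^ 2 / 2 < c * (l - μ) ^ 2 / 2 + ε by linarith))
  have f3 := (ha0.mul_const (Real.log 4)).eventually
    (gt_mem_nhds (show 0 * Real.log 4 < ε by linarith))
  filter_upwards [ha, hp, hs, hsum l, hsum (l + μ), hsum (l - μ), hpos l, f0, f1, f2, f3] with
    t a0 p0 s0 s1 s2 s3 m0 f0 f1 f2 f3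
  apply aux_le_elog a0
  have key := aux_L a0 hμp.le p0 s0 s1 s2 s3 O hb'
  have k : ∀ M y : ℝ, a t * Real.log M < y → M ≤ Real.exp (y / a t) := by
    intro M y h
    refine (Real.le_exp_log M).trans (Real.exp_le_exp.2 ?_)
    rw [le_div_iff₀ a0]; linarith
  have g1 := k _ _ f1
  have g2 := k _ _ f2
  have g3 : 4 ≤ Real.exp (ε / a t) := k 4 ε f3
  have g0 : Real.exp ((c * l ^ 2 / 2 - ε) / a t) ≤ ∑' k, p t k * Real.exp (l * X t k / a t) := by
    rw [← Real.le_log_iff_exp_le m0, div_le_iff₀ a0]; linarith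
  set M0 := ∑' k, p t k * Real.exp (l * X t k / a t)
  set M1 := ∑' k, p t k * Real.exp ((l + μ) * X t k / a t)
  set M2 := ∑' k, p t k * Real.exp ((l - μ) * X t k / a t)
  set Q := ∑' k, O.indicator (fun _ => p t k) (X t k)
  have mono : ∀ y z : ℝ, y ≤ z → Real.exp (y / a t) ≤ Real.exp (z / a t) := fun y z h =>
    Real.exp_le_exp.2 (div_le_div_of_nonneg_right h a0.le)
  have mul : ∀ y z : ℝ, Real.exp (y / a t) * Real.exp (z / a t) = Real.exp ((y + z) / a t) :=
    fun y z => by rw [← Real.exp_add, add_div]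
  have b1 : Real.exp (-(μ * (x + ρ)) / a t) * M1 * 4 ≤ M0 := by
    calc _ ≤ Real.exp (-(μ * (x + ρ)) / a t) * Real.exp ((c * (l + μ) ^ 2 / 2 + ε) / a t)
          * Real.exp (ε / a t) := by gcongr
      _ ≤ Real.exp ((c * l ^ 2 / 2 - ε) / a t) := by
        rw [mul, mul]; apply mono; rw [hx]; nlinarith
      _ ≤ M0 := g0
  have b2 : Real.exp ((μ * (x - ρ)) / a t) * M2 * 4 ≤ M0 := by
    calc _ ≤ Real.exp ((μ * (x - ρ)) / a t) * Real.exp ((c * (l - μ) ^ 2 / 2 + ε) / a t)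
          * Real.exp (ε / a t) := by gcongr
      _ ≤ Real.exp ((c * l ^ 2 / 2 - ε) / a t) := by
        rw [mul, mul]; apply mono; rw [hx]; nlinarith
      _ ≤ M0 := g0
  have b3 : M0 ≤ 2 * (Real.exp ((l * x + |l| * ρ) / a t) * Q) := by linarith
  have hQ : 0 ≤ Q := tsum_nonneg fun k => Set.indicator_nonneg (fun _ _ => p0 k) _
  have b4 : Real.exp ((c * l ^ 2 / 2 - ε) / a t) ≤
      Real.exp (ε / a t) * (Real.exp ((l * x + |l| * ρ) / a t) * Q) := by
    refine g0.trans (b3.trans ?_)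
    gcongr; linarith
  rw [← mul_assoc, mul] at b4
  have b5 : Real.exp ((ε + (l * x + |l| * ρ)) / a t) * Real.exp (r / a t) ≤
      Real.exp ((ε + (l * x + |l| * ρ)) / a t) * Q := by
    refine le_trans ?_ b4
    rw [mul]; apply mono; rw [hx]; nlinarith
  exact le_of_mul_le_mul_left b5 (Real.exp_pos _)

lemma aux_c_nonneg {p X : ℝ → ℕ → ℝ} {a : ℝ → ℝ} {c : ℝ}
    (ha : ∀ᶠ t in atTop, 0 < a t)
    (hp : ∀ᶠ t in atTop, ∀ k, 0 ≤ p t k) (hs : ∀ᶠ t in atTop, HasSum (p t) 1)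
    (hsum : ∀ l : ℝ, ∀ᶠ t in atTop, Summable (fun k => p t k * Real.exp (l * X t k / a t)))
    (hF : ∀ l : ℝ, Tendsto (fun t => a t * Real.log (∑' k, p t k * Real.exp (l * X t k / a t)))
      atTop (𝓝 (c * l ^ 2 / 2))) : 0 ≤ c := by
  by_contra hc
  push Not at hc
  have f1 := (hF 1).eventually (gt_mem_nhds (show c * 1 ^ 2 / 2 < 0 by linarith))
  have f2 := (hF (-1)).eventually (gt_mem_nhds (show c * (-1) ^ 2 / 2 < 0 by linarith))
  obtain ⟨t, a0, p0, s0, s1, s2, f1, f2⟩ :=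
    (ha.and (hp.and (hs.and ((hsum 1).and ((hsum (-1)).and (f1.and f2)))))).exists
  have k : ∀ M : ℝ, 0 ≤ M → a t * Real.log M < 0 → M < 1 := by
    intro M h0 h
    by_contra h1
    push Not at h1
    have := mul_nonneg a0.le (Real.log_nonneg h1)
    linarith
  have g1 := k _ (tsum_nonneg fun k => mul_nonneg (p0 k) (Real.exp_pos _).le) f1
  have g2 := k _ (tsum_nonneg fun k => mul_nonneg (p0 k) (Real.exp_pos _).le) f2
  have : ∑' k, (p t k * 2) ≤ ∑' k, (p t k * Real.exp (1 * X t k / a t) +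
      p t k * Real.exp (-1 * X t k / a t)) := by
    refine Summable.tsum_le_tsum (fun k => ?_) (s0.summable.mul_right 2) (s1.add s2)
    rw [← mul_add]
    refine mul_le_mul_of_nonneg_left ?_ (p0 k)
    have h1 := Real.add_one_le_exp (1 * X t k / a t)
    have h2 := Real.add_one_le_exp (-1 * X t k / a t)
    have h3 : -1 * X t k / a t = - (1 * X t k / a t) := by ring
    rw [h3] at h2 ⊢
    linarith
  rw [tsum_mul_right, s0.tsum_eq, s1.tsum_add s2] at this
  linarith

lemma aux_star_zero {c : ℝ} : tildeStar c 0 = 0 := by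
  unfold tildeStar; simp

lemma aux_lsc (c : ℝ) : LowerSemicontinuous (tildeStar c) := by
  by_cases hc : 0 < c
  · have : tildeStar c = fun x => (((x ^ 2 / (2 * c)) : ℝ) : EReal) := by
      funext x; simp [tildeStar, hc]
    rw [this]
    exact (continuous_coe_real_ereal.comp (by fun_prop)).lowerSemicontinuous
  · rw [lowerSemicontinuous_iff_isClosed_preimage]
    intro y
    have : tildeStar c = fun x => if x = 0 then (0 : EReal) else ⊤ := by
      funext x; simp [tildeStar, hc]
    by_cases hy : y = ⊤
    · subst hy; simp
    · have : tildeStar c ⁻¹' Set.Iic y ⊆ {0} := by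
        intro x hx
        by_contra h
        have h : x ≠ 0 := h
        simp [this, h, hy] at hx
      exact ((Set.finite_singleton (0:ℝ)).subset this).isClosed

lemma aux_compact (c η : ℝ) : IsCompact {x : ℝ | tildeStar c x ≤ (η : EReal)} := by
  by_cases hc : 0 < c
  · have hcl : IsClosed {x : ℝ | tildeStar c x ≤ (η : EReal)} :=
      lowerSemicontinuous_iff_isClosed_preimage.1 (aux_lsc c) _
    refine (isCompact_Icc (a := -(2 * c * η + 1)) (b := 2 * c * η + 1)).of_isClosed_subset hcl ?_
    intro x hx
    simp only [Set.mem_ofPred_eq, tildeStar, hc, if_true, EReal.coe_le_coe_iff] at hx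
    rw [div_le_iff₀ (by positivity)] at hx
    constructor <;> nlinarith [sq_nonneg (x - 1), sq_nonneg (x + 1)]
  · have : {x : ℝ | tildeStar c x ≤ (η : EReal)} ⊆ {0} := by
      intro x hx
      by_contra h
      have h : x ≠ 0 := h
      simp [tildeStar, hc, h] at hx
    exact ((Set.finite_singleton (0:ℝ)).subset this).isCompact

lemma aux_GE {p X : ℝ → ℕ → ℝ} {a : ℝ → ℝ} {c : ℝ}
    (ha : ∀ᶠ t in atTop, 0 < a t) (ha0 : Tendsto a atTop (𝓝 0))
    (hp : ∀ᶠ t in atTop, ∀ k, 0 ≤ p t k) (hs : ∀ᶠ t in atTop, HasSum (p t) 1)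
    (hsum : ∀ l : ℝ, ∀ᶠ t in atTop, Summable (fun k => p t k * Real.exp (l * X t k / a t)))
    (hpos : ∀ l : ℝ, ∀ᶠ t in atTop, 0 < ∑' k, p t k * Real.exp (l * X t k / a t))
    (hF : ∀ l : ℝ, Tendsto (fun t => a t * Real.log (∑' k, p t k * Real.exp (l * X t k / a t)))
      atTop (𝓝 (c * l ^ 2 / 2))) :
    (∀ C : Set ℝ, IsClosed C →
      limsup (fun t => (a t : EReal) * elog (∑' k, C.indicator (fun _ => p t k) (X t k))) atTop
        ≤ - ⨅ x ∈ C, tildeStar c x) ∧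
    (∀ O : Set ℝ, IsOpen O → - ⨅ x ∈ O, tildeStar c x ≤
      liminf (fun t => (a t : EReal) * elog (∑' k, O.indicator (fun _ => p t k) (X t k))) atTop) := by
  have hc := aux_c_nonneg ha hp hs hsum hF
  have hs' : ∀ᶠ t in atTop, Summable (p t) := hs.mono fun t h => h.summable
  constructor
  · intro C hC
    rw [EReal.le_neg]
    refine EReal.ge_of_forall_gt_iff_ge.1 ?_
    intro r hr
    rw [EReal.le_neg, ← EReal.coe_neg]
    obtain ⟨r', hr1, hr2⟩ := EReal.lt_iff_exists_real_btwn.1 hr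
    rw [EReal.coe_lt_coe_iff] at hr1
    have hI : ∀ x ∈ C, (r' : EReal) < tildeStar c x := fun x hx => hr2.trans_le (iInf₂_le x hx)
    by_cases hr0 : r' < 0
    · refine aux_upper (l := 0) (ρ := 0) ha ha0 hp hs' hsum hF le_rfl C
        (fun x _ => abs_nonneg x) ?_
      simp; linarith
    push Not at hr0
    rcases hc.eq_or_lt with hc0 | hc0
    · have h0 : (0:ℝ) ∈ Cᶜ := by
        intro h
        have := hI 0 h
        rw [aux_star_zero, ← EReal.coe_zero, EReal.coe_lt_coe_iff] at this
        linarith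
      obtain ⟨ρ, hρ, hb⟩ := Metric.isOpen_iff.1 hC.isOpen_compl 0 h0
      refine aux_upper (l := r' / ρ) (ρ := ρ) ha ha0 hp hs' hsum hF (by positivity) C
        (fun x hx => ?_) ?_
      · by_contra h
        push Not at h
        exact hb (by rw [Metric.mem_ball, Real.dist_eq, sub_zero]; exact h) hx
      · rw [← hc0, div_mul_cancel₀ _ hρ.ne']; linarith
    · obtain ⟨ρ, hρ⟩ : ∃ ρ, ρ = Real.sqrt (2 * c * r') := ⟨_, rfl⟩
      have hρ2 : ρ ^ 2 = 2 * c * r' := by rw [hρ, Real.sq_sqrt (by positivity)]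
      have hρ0 : 0 ≤ ρ := hρ ▸ Real.sqrt_nonneg _
      refine aux_upper (l := ρ / c) (ρ := ρ) ha ha0 hp hs' hsum hF (by positivity) C
        (fun x hx => ?_) ?_
      · have := hI x hx
        simp only [tildeStar, hc0, if_true, EReal.coe_lt_coe_iff] at this
        rw [lt_div_iff₀ (by positivity)] at this
        rw [hρ]
        apply Real.sqrt_le_iff.2 ⟨abs_nonneg x, _⟩
        rw [sq_abs]; linarith
      · have : ρ / c * ρ - c * (ρ / c) ^ 2 / 2 = ρ ^ 2 / (2 * c) := by field_simp; ring
        rw [this, hρ2]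
        have : 2 * c * r' / (2 * c) = r' := by field_simp
        linarith
  · intro O hO
    rw [EReal.neg_le]
    refine le_iInf₂ fun x hx => ?_
    rw [EReal.neg_le]
    obtain ⟨l, hl⟩ | htop : (∃ l, x = c * l ∧ tildeStar c x = ((c * l ^ 2 / 2 : ℝ) : EReal)) ∨
        tildeStar c x = ⊤ := by
      rcases hc.eq_or_lt with hc0 | hc0
      · by_cases hx0 : x = 0
        · left; exact ⟨0, by simp [hx0], by simp [hx0, aux_star_zero]⟩
        · right; simp [tildeStar, ← hc0, hx0]
      · left
        refine ⟨x / c, by field_simp, ?_⟩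
        simp only [tildeStar, hc0, if_true, EReal.coe_eq_coe_iff]
        field_simp
    · rw [hl.2, ← EReal.coe_neg]
      refine EReal.ge_of_forall_gt_iff_ge.1 ?_
      intro r hr
      rw [EReal.coe_lt_coe_iff] at hr
      exact aux_lower hc ha ha0 hp hs' hsum hpos hF O hO hx hl.1 hr
    · rw [htop]; simp

lemma aux_half {n : ℕ} {d : ℕ → ℕ → ℝ} {δf : ℕ → ℝ → ℝ} {v Δ : ℝ → ℝ}
    (h : PSCond n d δf v Δ) :
    ∀ᶠ y in atTop, ∑ k ∈ Finset.range n, d k n * y ^ k ≤ Dser d n y / 2 := by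
  obtain ⟨K, hK, hd⟩ := h.B2 n
  rw [h.B1_d K hK K] at hd
  have ht : Tendsto (fun y : ℝ => ∑ k ∈ Finset.range n, d k n * (y ^ k / y ^ K)) atTop
      (𝓝 (∑ k ∈ Finset.range n, d k n * 0)) :=
    tendsto_finsetSum _ fun k hk => (tendsto_pow_div_pow_atTop_zero
      ((Finset.mem_range.1 hk).trans_le hK)).const_mul _
  simp only [mul_zero, Finset.sum_const_zero] at ht
  filter_upwards [ht.eventually (gt_mem_nhds (show (0:ℝ) < d K n / 2 by positivity)),
    eventually_gt_atTop 0] with y hy y0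
  have h1 : d K n * y ^ K ≤ Dser d n y := by
    unfold Dser
    exact (h.D_summable n y y0).le_tsum K fun j _ => mul_nonneg (h.d_nonneg j n) (pow_nonneg y0.le j)
  have h2 : ∑ k ∈ Finset.range n, d k n * y ^ k =
      (∑ k ∈ Finset.range n, d k n * (y ^ k / y ^ K)) * y ^ K := by
    rw [Finset.sum_mul]
    refine Finset.sum_congr rfl fun k _ => ?_
    field_simp
  rw [h2]
  have := mul_le_mul_of_nonneg_right hy.le (pow_nonneg y0.le K)
  linarith

lemma aux_w_le {n : ℕ} {d : ℕ → ℕ → ℝ} {δf : ℕ → ℝ → ℝ} {v Δ : ℝ → ℝ}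
    (h : PSCond n d δf v Δ) :
    ∀ᶠ t in atTop, ∀ k, d k k * (δf k t) ^ k / Dser d k (δf k t) ≤
      d k n * (δf n t) ^ k / Dser d n (δf n t) := by
  have h1 : ∀ᶠ t in atTop, ∀ k ∈ Finset.range n, d k k * (δf k t) ^ k / Dser d k (δf k t) ≤
      d k n * (δf n t) ^ k / Dser d n (δf n t) := by
    rw [Finset.eventually_all]
    intro k hk
    have hk := Finset.mem_range.1 hk
    rcases (h.d_nonneg k n).eq_or_lt with h0 | h0
    · refine Eventually.of_forall fun t => ?_
      rw [h.B3_zero k hk h0.symm, ← h0]; simp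
    · filter_upwards [(h.B3_lim k hk h0).eventually (gt_mem_nhds zero_lt_one),
        eventually_gt_atTop 0] with t ht t0
      have := h.delta_pos n t t0
      have := h.D_pos n _ this
      rw [div_lt_one (by positivity)] at ht
      exact ht.le
  filter_upwards [h1] with t ht k
  by_cases hk : k < n
  · exact ht k (Finset.mem_range.2 hk)
  · push Not at hk
    have : Dser d k = Dser d n := by
      funext x; unfold Dser; simp only [h.B1_d k hk]
    rw [this, h.B1_delta k hk, h.B1_d k hk]

lemma aux_S {n : ℕ} {d : ℕ → ℕ → ℝ} {δf : ℕ → ℝ → ℝ} {v Δ : ℝ → ℝ}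
    (h : PSCond n d δf v Δ) {u : ℝ → ℝ} (hu : ∀ t, 0 < u t) (hu1 : Tendsto u atTop (𝓝 1)) :
    ∀ᶠ t in atTop,
      Summable (fun k => d k k * (δf k t) ^ k / Dser d k (δf k t) * u t ^ k) ∧
      Dser d n (u t * δf n t) / Dser d n (δf n t) / 2 ≤
        ∑' k, d k k * (δf k t) ^ k / Dser d k (δf k t) * u t ^ k ∧
      ∑' k, d k k * (δf k t) ^ k / Dser d k (δf k t) * u t ^ k ≤
        Dser d n (u t * δf n t) / Dser d n (δf n t) := by
  have hinf : Tendsto (fun t => u t * δf n t) atTop atTop :=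
    Tendsto.pos_mul_atTop zero_lt_one hu1 (h.delta_tendsto n)
  filter_upwards [aux_w_le h, hinf.eventually (aux_half h), eventually_gt_atTop 0] with t hw hh t0
  have δ0 := h.delta_pos n t t0
  have D0 := h.D_pos n _ δ0
  have u0 := hu t
  have uδ : 0 < u t * δf n t := by positivity
  have hq : HasSum (fun k => d k n * (δf n t) ^ k / Dser d n (δf n t) * u t ^ k)
      (Dser d n (u t * δf n t) / Dser d n (δf n t)) := by
    have := ((h.D_summable n _ uδ).hasSum).div_const (Dser d n (δf n t))
    have e : (fun k => d k n * (δf n t) ^ k / Dser d n (δf n t) * u t ^ k) =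
        fun k => d k n * (u t * δf n t) ^ k / Dser d n (δf n t) := by
      funext k; rw [mul_pow]; ring
    rw [e]
    exact this
  have w0 : ∀ k, 0 ≤ d k k * (δf k t) ^ k / Dser d k (δf k t) := fun k => by
    have := h.delta_pos k t t0
    have := h.D_pos k _ this
    have := h.d_nonneg k k
    positivity
  have hle : ∀ k, d k k * (δf k t) ^ k / Dser d k (δf k t) * u t ^ k ≤
      d k n * (δf n t) ^ k / Dser d n (δf n t) * u t ^ k := fun k =>
    mul_le_mul_of_nonneg_right (hw k) (pow_nonneg u0.le k)
  have hs : Summable (fun k => d k k * (δf k t) ^ k / Dser d k (δf k t) * u t ^ k) :=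
    Summable.of_nonneg_of_le (fun k => mul_nonneg (w0 k) (pow_nonneg u0.le k)) hle hq.summable
  refine ⟨hs, ?_, ?_⟩
  · rw [← hs.sum_add_tsum_nat_add n]
    have e1 := hq.summable.sum_add_tsum_nat_add n
    rw [hq.tsum_eq] at e1
    have e2 : ∀ k, d (k + n) (k + n) * (δf (k + n) t) ^ (k + n) /
        Dser d (k + n) (δf (k + n) t) * u t ^ (k + n) =
        d (k + n) n * (δf n t) ^ (k + n) / Dser d n (δf n t) * u t ^ (k + n) := fun k => by
      have hk : n ≤ k + n := by omega
      have : Dser d (k + n) = Dser d n := by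
        funext x; unfold Dser; simp only [h.B1_d _ hk]
      rw [this, h.B1_delta _ hk, h.B1_d _ hk]
    rw [tsum_congr e2]
    have e3 : 0 ≤ ∑ k ∈ Finset.range n, d k k * (δf k t) ^ k / Dser d k (δf k t) * u t ^ k :=
      Finset.sum_nonneg fun k _ => mul_nonneg (w0 k) (pow_nonneg u0.le k)
    have e4 : ∑ k ∈ Finset.range n, d k n * (δf n t) ^ k / Dser d n (δf n t) * u t ^ k =
        (∑ k ∈ Finset.range n, d k n * (u t * δf n t) ^ k) / Dser d n (δf n t) := by
      rw [Finset.sum_div]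
      refine Finset.sum_congr rfl fun k _ => ?_
      rw [mul_pow]; ring
    have e5 := div_le_div_of_nonneg_right hh D0.le
    rw [div_right_comm] at e5
    linarith
  · rw [← hq.tsum_eq]
    exact hs.tsum_le_tsum hle hq.summable

lemma aux_Lam {Δ : ℝ → ℝ} (hd : ∀ u : ℝ, 0 < u → DifferentiableAt ℝ Δ u)
    (hd2 : DifferentiableAt ℝ (deriv Δ) 1) :
    Tendsto (fun s => (Lam Δ s - s * deriv (Lam Δ) 0) / s ^ 2) (𝓝[≠] 0)
      (𝓝 (deriv (deriv (Lam Δ)) 0 / 2)) := by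
  have h1 : ∀ s, HasDerivAt (Lam Δ) (deriv Δ (Real.exp s) * Real.exp s) s := fun s =>
    (((hd _ (Real.exp_pos s)).hasDerivAt).comp s (Real.hasDerivAt_exp s)).sub_const _
  have h2 : deriv (Lam Δ) = fun s => deriv Δ (Real.exp s) * Real.exp s := funext fun s => (h1 s).deriv
  have h3 : DifferentiableAt ℝ (deriv (Lam Δ)) 0 := by
    rw [h2]
    have : DifferentiableAt ℝ (fun s => deriv Δ (Real.exp s)) 0 := by
      apply DifferentiableAt.comp (g := deriv Δ)
      · rwa [Real.exp_zero]
      · exact Real.differentiableAt_exp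
    exact this.mul Real.differentiableAt_exp
  have h4 := h3.hasDerivAt.tendsto_slope
  have hne : ∀ᶠ s : ℝ in 𝓝[≠] 0, s ≠ 0 := eventually_mem_nhdsWithin
  refine HasDerivAt.lhopital_zero_nhdsNE (f' := fun s => deriv (Lam Δ) s - deriv (Lam Δ) 0)
    (g' := fun s => 2 * s) ?_ ?_ ?_ ?_ ?_ ?_
  · refine Eventually.of_forall fun s => ?_
    have := ((h1 s).differentiableAt.hasDerivAt).sub ((hasDerivAt_id s).mul_const (deriv (Lam Δ) 0))
    rw [one_mul] at this
    exact this
  · refine Eventually.of_forall fun s => ?_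
    simpa using hasDerivAt_pow 2 s
  · filter_upwards [hne] with s hs
    simpa using hs
  · have : ContinuousAt (fun s => Lam Δ s - s * deriv (Lam Δ) 0) 0 :=
      (h1 0).continuousAt.sub (continuousAt_id.mul continuousAt_const)
    have h5 := this.tendsto.mono_left (nhdsWithin_le_nhds (s := {0}ᶜ))
    simpa [Lam] using h5
  · have : ContinuousAt (fun s : ℝ => s ^ 2) 0 := by fun_prop
    have h5 := this.tendsto.mono_left (nhdsWithin_le_nhds (s := {0}ᶜ))
    simpa using h5
  · refine (h4.div_const 2).congr' ?_
    filter_upwards [hne] with s hs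
    rw [slope_def_field, sub_zero]
    field_simp

/-- Proposition 3.2 (moderate deviations): under Conditions (B1), (B2), (B3), twice
differentiability of `Δ` at `1`, and the boundedness hypotheses on `H1`, `H2`, `H3`,
for every family `a(t) > 0` with `a(t) → 0` and `v(δ(t))a(t) → ∞`, the centered and rescaled
family satisfies the LDP with speed `1/a(t)` and good rate function `Λ̃*`. -/
theorem prop_MD_eventually_constant
    (n : ℕ) (d : ℕ → ℕ → ℝ) (δf : ℕ → ℝ → ℝ) (v Δ : ℝ → ℝ)
    (hcond : PSCond n d δf v Δ)
    (hZsum : ∀ t : ℝ, 0 < t →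
      Summable (fun j : ℕ => d j j * (δf j t) ^ j / Dser d j (δf j t)))
    (hZpos : ∀ t : ℝ, 0 < t → 0 < Znorm d δf t)
    -- `Δ` is twice differentiable at `1` (so `Λ''(0)` exists)
    (hDelta'' : DifferentiableAt ℝ (deriv Δ) 1)
    -- hypothesis (i): `H1(t)` is bounded whenever `u(t) → 1`
    (hH1 : ∀ u : ℝ → ℝ, (∀ t : ℝ, 0 < t → 0 < u t) → Tendsto u atTop (𝓝 1) →
      ∃ M : ℝ, ∀ t : ℝ, 0 < t →
        |Real.log (Dser d n (u t * δf n t) / Dser d n (δf n t))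
          - v (δf n t) * (Δ (u t) - Δ 1)| ≤ M)
    -- hypothesis (ii): `H2(t)` is bounded
    (hH2 : ∃ M : ℝ, ∀ t : ℝ, 0 < t →
      |Real.sqrt (v (δf n t)) * (deriv (Lam Δ) 0
        - δf n t * deriv (Dser d n) (δf n t) / (v (δf n t) * Dser d n (δf n t)))| ≤ M)
    -- hypothesis (iii): `H3(t)` is bounded
    (hH3 : ∃ M : ℝ, ∀ t : ℝ, 0 < t →
      |(Real.sqrt (v (δf n t)))⁻¹ *
        (δf n t * deriv (Dser d n) (δf n t) / Dser d n (δf n t) - meanN d δf t)| ≤ M)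
    (a : ℝ → ℝ) (ha_pos : ∀ t : ℝ, 0 < t → 0 < a t)
    (ha0 : Tendsto a atTop (𝓝 0))
    (hva : Tendsto (fun t : ℝ => v (δf n t) * a t) atTop atTop) :
    LowerSemicontinuous (tildeStar (deriv (deriv (Lam Δ)) 0)) ∧
    (∀ η : ℝ, 0 ≤ η →
      IsCompact {x : ℝ | tildeStar (deriv (deriv (Lam Δ)) 0) x ≤ (η : EReal)}) ∧
    (∀ C : Set ℝ, IsClosed C →
      Filter.limsup (fun t : ℝ => ((a t : ℝ) : EReal) * elog (probMD n d δf v a t C)) atTop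
        ≤ - ⨅ x ∈ C, tildeStar (deriv (deriv (Lam Δ)) 0) x) ∧
    (∀ O : Set ℝ, IsOpen O →
      - ⨅ x ∈ O, tildeStar (deriv (deriv (Lam Δ)) 0) x ≤
        Filter.liminf
          (fun t : ℝ => ((a t : ℝ) : EReal) * elog (probMD n d δf v a t O)) atTop) := by
  have hδ := hcond.delta_pos n
  have hv : ∀ t, 0 < t → 0 < v (δf n t) := fun t ht => hcond.v_pos _ (hδ t ht)
  have hsq : Tendsto (fun t => Real.sqrt (v (δf n t) * a t)) atTop atTop :=
    Real.tendsto_sqrt_atTop.comp hva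
  have hs0 : ∀ l : ℝ, Tendsto (fun t => l / Real.sqrt (v (δf n t) * a t)) atTop (𝓝 0) := fun l =>
    hsq.const_div_atTop l
  have hu1 : ∀ l : ℝ, Tendsto (fun t => Real.exp (l / Real.sqrt (v (δf n t) * a t))) atTop (𝓝 1) := by
    intro l
    have := (Real.continuous_exp.tendsto 0).comp (hs0 l)
    rwa [Real.exp_zero] at this
  -- the weights
  have w0 : ∀ t, 0 < t → ∀ k, 0 ≤ d k k * (δf k t) ^ k / Dser d k (δf k t) := fun t t0 k => by
    have := hcond.delta_pos k t t0
    have := hcond.D_pos k _ this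
    have := hcond.d_nonneg k k
    positivity
  have hZ : ∀ᶠ t in atTop, 1 / 2 ≤ Znorm d δf t ∧ Znorm d δf t ≤ 1 := by
    filter_upwards [aux_S hcond (u := fun _ => 1) (fun _ => one_pos) tendsto_const_nhds,
      eventually_gt_atTop 0] with t ht t0
    have D0 := hcond.D_pos n _ (hδ t t0)
    simp only [one_pow, mul_one, one_mul, div_self D0.ne'] at ht
    exact ht.2
  have hterm : ∀ l t : ℝ, 0 < t → ∀ k : ℕ, pmfN d δf t k *
      Real.exp (l * (((k : ℝ) - meanN d δf t) * Real.sqrt (v (δf n t) * a t) / v (δf n t)) / a t) =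
      d k k * (δf k t) ^ k / Dser d k (δf k t) *
        Real.exp (l / Real.sqrt (v (δf n t) * a t)) ^ k *
        (Real.exp (-(l / Real.sqrt (v (δf n t) * a t) * meanN d δf t)) / Znorm d δf t) := by
    intro l t t0 k
    have v0 := hv t t0
    have a0 := ha_pos t t0
    have e1 : l * (((k : ℝ) - meanN d δf t) * Real.sqrt (v (δf n t) * a t) / v (δf n t)) / a t =
        k * (l / Real.sqrt (v (δf n t) * a t)) +
          -(l / Real.sqrt (v (δf n t) * a t) * meanN d δf t) := by
      have hs : Real.sqrt (v (δf n t) * a t) ^ 2 = v (δf n t) * a t := Real.sq_sqrt (by positivity)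
      have hs' : 0 < Real.sqrt (v (δf n t) * a t) := Real.sqrt_pos.2 (by positivity)
      generalize Real.sqrt (v (δf n t) * a t) = q at hs hs'
      field_simp
      rw [hs]; ring
    rw [e1, Real.exp_add, Real.exp_nat_mul, pmfN]
    ring
  have hM : ∀ l : ℝ, ∀ᶠ t in atTop,
      Summable (fun k : ℕ => pmfN d δf t k * Real.exp
        (l * (((k : ℝ) - meanN d δf t) * Real.sqrt (v (δf n t) * a t) / v (δf n t)) / a t)) ∧
      0 < ∑' k : ℕ, pmfN d δf t k * Real.exp
        (l * (((k : ℝ) - meanN d δf t) * Real.sqrt (v (δf n t) * a t) / v (δf n t)) / a t) ∧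
      |Real.log (∑' k : ℕ, pmfN d δf t k * Real.exp
        (l * (((k : ℝ) - meanN d δf t) * Real.sqrt (v (δf n t) * a t) / v (δf n t)) / a t)) -
        (Real.log (Dser d n (Real.exp (l / Real.sqrt (v (δf n t) * a t)) * δf n t) /
          Dser d n (δf n t)) - l / Real.sqrt (v (δf n t) * a t) * meanN d δf t)| ≤ Real.log 2 := by
    intro l
    filter_upwards [aux_S hcond (fun t => Real.exp_pos _) (hu1 l), hZ, eventually_gt_atTop 0] with
      t hS hZt t0
    obtain ⟨hS0, hS1, hS2⟩ := hS
    obtain ⟨hZ1, hZ2⟩ := hZt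
    have Z0 := hZpos t t0
    have D0 := hcond.D_pos n _ (hδ t t0)
    have D1 := hcond.D_pos n (Real.exp (l / Real.sqrt (v (δf n t) * a t)) * δf n t)
      (mul_pos (Real.exp_pos _) (hδ t t0))
    have R0 := div_pos D1 D0
    simp only [hterm l t t0]
    refine ⟨hS0.mul_right _, ?_⟩
    rw [tsum_mul_right]
    generalize (∑' k, d k k * (δf k t) ^ k / Dser d k (δf k t) *
        Real.exp (l / Real.sqrt (v (δf n t) * a t)) ^ k) = S at *
    generalize Dser d n (Real.exp (l / Real.sqrt (v (δf n t) * a t)) * δf n t) /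
        Dser d n (δf n t) = R at *
    generalize l / Real.sqrt (v (δf n t) * a t) * meanN d δf t = y at *
    generalize Znorm d δf t = Z at *
    have S0 : 0 < S := by linarith
    have E0 := Real.exp_pos (-y)
    refine ⟨by positivity, ?_⟩
    rw [Real.log_mul S0.ne' (by positivity), Real.log_div E0.ne' Z0.ne', Real.log_exp]
    have l1 := Real.log_le_log (by positivity) hS1
    have l2 := Real.log_le_log S0 hS2
    have l3 := Real.log_le_log (by positivity) hZ1
    have l4 := Real.log_le_log Z0 hZ2
    rw [Real.log_div R0.ne' two_ne_zero] at l1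
    rw [one_div, Real.log_inv] at l3
    rw [Real.log_one] at l4
    rw [abs_le]; constructor <;> linarith
  have hpmf : ∀ᶠ t in atTop, ∀ k, 0 ≤ pmfN d δf t k := by
    filter_upwards [eventually_gt_atTop 0] with t t0 k
    exact div_nonneg (w0 t t0 k) (hZpos t t0).le
  have hpmf1 : ∀ᶠ t in atTop, HasSum (pmfN d δf t) 1 := by
    filter_upwards [eventually_gt_atTop 0] with t t0
    have := (hZsum t t0).hasSum.div_const (Znorm d δf t)
    change HasSum (pmfN d δf t) (Znorm d δf t / Znorm d δf t) at this
    rwa [div_self (hZpos t t0).ne'] at this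
  obtain ⟨M2, hM2⟩ := hH2
  obtain ⟨M3, hM3⟩ := hH3
  have hmean : ∀ t, 0 < t → |v (δf n t) * deriv (Lam Δ) 0 - meanN d δf t| ≤
      (M2 + M3) * Real.sqrt (v (δf n t)) := by
    intro t t0
    have h2 := hM2 t t0
    have h3 := hM3 t t0
    have v0 := hv t t0
    have D0 := hcond.D_pos n _ (hδ t t0)
    have q0 : 0 < Real.sqrt (v (δf n t)) := Real.sqrt_pos.2 v0
    have hq : v (δf n t) = Real.sqrt (v (δf n t)) ^ 2 := (Real.sq_sqrt v0.le).symm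
    have e : v (δf n t) * deriv (Lam Δ) 0 - meanN d δf t =
        (Real.sqrt (v (δf n t)) * (deriv (Lam Δ) 0
        - δf n t * deriv (Dser d n) (δf n t) / (v (δf n t) * Dser d n (δf n t))) +
        (Real.sqrt (v (δf n t)))⁻¹ *
        (δf n t * deriv (Dser d n) (δf n t) / Dser d n (δf n t) - meanN d δf t)) *
          Real.sqrt (v (δf n t)) := by
      generalize Real.sqrt (v (δf n t)) = q at *
      rw [hq]
      field_simp
      ring
    rw [e, abs_mul, abs_of_pos q0]
    exact mul_le_mul_of_nonneg_right ((abs_add_le _ _).trans (add_le_add h2 h3)) q0.le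
  have hF : ∀ l : ℝ, Tendsto (fun t => a t * Real.log (∑' k : ℕ, pmfN d δf t k * Real.exp
        (l * (((k : ℝ) - meanN d δf t) * Real.sqrt (v (δf n t) * a t) / v (δf n t)) / a t)))
      atTop (𝓝 (deriv (deriv (Lam Δ)) 0 * l ^ 2 / 2)) := by
    intro l
    obtain ⟨M1, hM1⟩ := hH1 (fun t => Real.exp (l / Real.sqrt (v (δf n t) * a t)))
      (fun t _ => Real.exp_pos _) (hu1 l)
    have main : Tendsto (fun t => a t * v (δf n t) *
        (Lam Δ (l / Real.sqrt (v (δf n t) * a t)) -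
          l / Real.sqrt (v (δf n t) * a t) * deriv (Lam Δ) 0)) atTop
        (𝓝 (deriv (deriv (Lam Δ)) 0 * l ^ 2 / 2)) := by
      by_cases hl : l = 0
      · subst hl
        simp [Lam]
      · have h1 : Tendsto (fun t => l / Real.sqrt (v (δf n t) * a t)) atTop (𝓝[≠] 0) := by
          refine tendsto_nhdsWithin_iff.2 ⟨hs0 l, ?_⟩
          filter_upwards [eventually_gt_atTop 0] with t t0
          exact div_ne_zero hl (Real.sqrt_pos.2 (mul_pos (hv t t0) (ha_pos t t0))).ne'
        have h2 := ((aux_Lam hcond.Delta_diff hDelta'').comp h1).const_mul (l ^ 2)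
        rw [show deriv (deriv (Lam Δ)) 0 * l ^ 2 / 2 = l ^ 2 * (deriv (deriv (Lam Δ)) 0 / 2) by ring]
        refine h2.congr' ?_
        filter_upwards [eventually_gt_atTop 0] with t t0
        have v0 := hv t t0
        have a0 := ha_pos t t0
        simp only [Function.comp]
        rw [div_pow, Real.sq_sqrt (by positivity)]
        field_simp
    have hb : Tendsto (fun t => a t * (Real.log 2 + M1) + |l| * (M2 + M3) * Real.sqrt (a t))
        atTop (𝓝 0) := by
      have h1 := (Real.continuous_sqrt.tendsto 0).comp ha0
      have h2 := (ha0.mul_const (Real.log 2 + M1)).add (h1.const_mul (|l| * (M2 + M3)))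
      simpa using h2
    have hdiff := squeeze_zero_norm' (f := fun t => a t * Real.log (∑' k : ℕ, pmfN d δf t k * Real.exp
        (l * (((k : ℝ) - meanN d δf t) * Real.sqrt (v (δf n t) * a t) / v (δf n t)) / a t)) -
        a t * v (δf n t) *
        (Lam Δ (l / Real.sqrt (v (δf n t) * a t)) -
          l / Real.sqrt (v (δf n t) * a t) * deriv (Lam Δ) 0)) ?_ hb
    · have := hdiff.add main
      simpa using this
    · filter_upwards [hM l, eventually_gt_atTop 0] with t ht t0
      have h1 := ht.2.2
      have h2 := hM1 t t0
      have h3 := hmean t t0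
      have v0 := hv t t0
      have a0 := ha_pos t t0
      change |Real.log _ - v (δf n t) * Lam Δ (l / Real.sqrt (v (δf n t) * a t))| ≤ M1 at h2
      have hs : |l / Real.sqrt (v (δf n t) * a t)| * Real.sqrt (v (δf n t)) * a t =
          |l| * Real.sqrt (a t) := by
        rw [abs_div, abs_of_nonneg (Real.sqrt_nonneg _), Real.sqrt_mul v0.le]
        have qv := Real.sqrt_pos.2 v0
        have qa := Real.sqrt_pos.2 a0
        have := Real.sq_sqrt a0.le
        field_simp
        rw [this]
      rw [Real.norm_eq_abs]
      generalize Real.log (∑' k : ℕ, pmfN d δf t k * Real.exp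
        (l * (((k : ℝ) - meanN d δf t) * Real.sqrt (v (δf n t) * a t) / v (δf n t)) / a t)) = A at *
      generalize l / Real.sqrt (v (δf n t) * a t) = s at *
      generalize Real.log (Dser d n (Real.exp s * δf n t) / Dser d n (δf n t)) = B at *
      have e : a t * A - a t * v (δf n t) * (Lam Δ s - s * deriv (Lam Δ) 0) =
          a t * ((A - (B - s * meanN d δf t)) + (B - v (δf n t) * Lam Δ s) +
            s * (v (δf n t) * deriv (Lam Δ) 0 - meanN d δf t)) := by ring
      rw [e, abs_mul, abs_of_pos a0]
      have h4 : |s * (v (δf n t) * deriv (Lam Δ) 0 - meanN d δf t)| ≤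
          |s| * ((M2 + M3) * Real.sqrt (v (δf n t))) := by
        rw [abs_mul]; exact mul_le_mul_of_nonneg_left h3 (abs_nonneg _)
      calc _ ≤ a t * (Real.log 2 + M1 + |s| * ((M2 + M3) * Real.sqrt (v (δf n t)))) := by
            refine mul_le_mul_of_nonneg_left ?_ a0.le
            exact (abs_add_le _ _).trans (add_le_add ((abs_add_le _ _).trans (add_le_add h1 h2)) h4)
        _ = a t * (Real.log 2 + M1) +
            (M2 + M3) * (|s| * Real.sqrt (v (δf n t)) * a t) := by ring
        _ = _ := by rw [hs]; ring
  refine ⟨aux_lsc _, fun η _ => aux_compact _ η, ?_⟩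
  exact aux_GE (p := pmfN d δf) (X := fun t k =>
      ((k : ℝ) - meanN d δf t) * Real.sqrt (v (δf n t) * a t) / v (δf n t))
    ((eventually_gt_atTop 0).mono fun t t0 => ha_pos t t0) ha0 hpmf hpmf1
    (fun l => (hM l).mono fun t h => h.1) (fun l => (hM l).mono fun t h => h.2.1) hF
end

section
/- Assume Conditions (B1), (B2), (B3), that Δ is twice differentiable at 1 (so Λ''(0) exists), and the boundedness hypotheses (i), (ii), (iii). Then for every family of positive numbers {a(t) : t > 0} with a(t) → 0 and v(δ(t))·a(t) → ∞ as t → ∞, and every θ ∈ ℝ, one has lim_{t→∞} a(t) log E[ exp( θ (N(t) − E[N(t)]) / √(v(δ(t)) a(t)) ) ] = θ² Λ''(0) / 2. -/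
open Filter Topology

theorem aux_low (n : ℕ) (d : ℕ → ℕ → ℝ) (δf : ℕ → ℝ → ℝ) (v Δ : ℝ → ℝ)
    (hc : PSCond n d δf v Δ) :
    ∀ᶠ x : ℝ in atTop, ∑ k ∈ Finset.range n, d k n * x ^ k ≤ Dser d n x / 2 := by
  obtain ⟨k0, hk0, hpos⟩ := hc.B2 n
  rw [hc.B1_d k0 hk0 k0] at hpos
  have h1 : Tendsto (fun x : ℝ => ∑ k ∈ Finset.range n, d k n * (x ^ k / x ^ k0)) atTop (𝓝 0) := by
    have : Tendsto (fun x : ℝ => ∑ k ∈ Finset.range n, d k n * (x ^ k / x ^ k0)) atTop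
        (𝓝 (∑ k ∈ Finset.range n, d k n * 0)) := by
      refine tendsto_finsetSum _ fun k hk => ?_
      refine Tendsto.const_mul _ ?_
      exact tendsto_pow_div_pow_atTop_zero (lt_of_lt_of_le (Finset.mem_range.1 hk) hk0)
    simpa using this
  have h2 := h1.eventually (gt_mem_nhds (show (0:ℝ) < d k0 n / 2 by positivity))
  filter_upwards [h2, eventually_gt_atTop 0] with x hx hx0
  have h3 : d k0 n * x ^ k0 ≤ Dser d n x :=
    (hc.D_summable n x hx0).le_tsum k0
      (fun j _ => mul_nonneg (hc.d_nonneg _ _) (by positivity))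
  have hp : 0 < x ^ k0 := by positivity
  have h4 : ∑ k ∈ Finset.range n, d k n * x ^ k
      = (∑ k ∈ Finset.range n, d k n * (x ^ k / x ^ k0)) * x ^ k0 := by
    rw [Finset.sum_mul]
    refine Finset.sum_congr rfl fun k _ => ?_
    field_simp
  rw [h4]
  nlinarith

theorem aux_sandwich (n : ℕ) (d : ℕ → ℕ → ℝ) (δf : ℕ → ℝ → ℝ) (v Δ : ℝ → ℝ)
    (hc : PSCond n d δf v Δ) (t u : ℝ) (ht : 0 < t) (hu : 0 < u)
    (hw : ∀ k < n, d k k * (δf k t) ^ k / Dser d k (δf k t)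
      ≤ d k n * (δf n t) ^ k / Dser d n (δf n t))
    (hx : ∑ k ∈ Finset.range n, d k n * (u * δf n t) ^ k ≤ Dser d n (u * δf n t) / 2) :
    Dser d n (u * δf n t) / Dser d n (δf n t) / 2 ≤
      ∑' k : ℕ, u ^ k * (d k k * (δf k t) ^ k / Dser d k (δf k t)) ∧
    ∑' k : ℕ, u ^ k * (d k k * (δf k t) ^ k / Dser d k (δf k t)) ≤
      Dser d n (u * δf n t) / Dser d n (δf n t) := by
  have hδ := hc.delta_pos n t ht
  have hD := hc.D_pos n _ hδ
  set f : ℕ → ℝ := fun k => u ^ k * (d k k * (δf k t) ^ k / Dser d k (δf k t)) with hf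
  set g : ℕ → ℝ := fun k => d k n * (u * δf n t) ^ k / Dser d n (δf n t) with hg
  have hg' : ∀ k, g k = u ^ k * (d k n * (δf n t) ^ k / Dser d n (δf n t)) := by
    intro k; simp only [hg]; rw [mul_pow]; ring
  have hDs : HasSum g (Dser d n (u * δf n t) / Dser d n (δf n t)) :=
    (hc.D_summable n _ (mul_pos hu hδ)).hasSum.div_const _
  have hf0 : ∀ k, 0 ≤ f k := by
    intro k
    have h1 := hc.delta_pos k t ht
    have h2 := hc.D_pos k _ h1
    have h3 := hc.d_nonneg k k
    simp only [hf]; positivity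
  have heq : ∀ k, n ≤ k → f k = g k := by
    intro k hk
    rw [hg' k]
    have e : Dser d k = Dser d n := by
      funext x; simp only [Dser, hc.B1_d k hk]
    simp only [hf]; rw [e, hc.B1_delta k hk, hc.B1_d k hk k]
  have hle : ∀ k, f k ≤ g k := by
    intro k
    rcases lt_or_ge k n with hk | hk
    · rw [hg' k]
      exact mul_le_mul_of_nonneg_left (hw k hk) (by positivity)
    · exact (heq k hk).le
  have hsf : Summable f := Summable.of_nonneg_of_le hf0 hle hDs.summable
  constructor
  · have e1 := hsf.sum_add_tsum_nat_add n
    have e2 := hDs.summable.sum_add_tsum_nat_add n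
    rw [hDs.tsum_eq] at e2
    have e3 : ∑' i, f (i + n) = ∑' i, g (i + n) :=
      tsum_congr fun i => heq _ (Nat.le_add_left _ _)
    have e4 : 0 ≤ ∑ i ∈ Finset.range n, f i := Finset.sum_nonneg fun i _ => hf0 i
    have e5 : ∑ i ∈ Finset.range n, g i ≤ Dser d n (u * δf n t) / Dser d n (δf n t) / 2 := by
      simp only [hg]
      rw [← Finset.sum_div, div_right_comm]
      exact div_le_div_of_nonneg_right hx hD.le
    linarith
  · rw [← hDs.tsum_eq]
    exact hsf.tsum_le_tsum hle hDs.summable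

theorem aux_deriv (Δ : ℝ → ℝ) (hd : ∀ u : ℝ, 0 < u → DifferentiableAt ℝ Δ u) (x : ℝ) :
    HasDerivAt (Lam Δ) (deriv Δ (Real.exp x) * Real.exp x) x := by
  have h := ((hd _ (Real.exp_pos x)).hasDerivAt.comp x (Real.hasDerivAt_exp x)).sub_const (Δ 1)
  exact h

theorem aux_taylor (Δ : ℝ → ℝ) (hd : ∀ u : ℝ, 0 < u → DifferentiableAt ℝ Δ u)
    (hDelta'' : DifferentiableAt ℝ (deriv Δ) 1) :
    Tendsto (fun x => (Lam Δ x - deriv (Lam Δ) 0 * x) / x ^ 2) (𝓝[≠] 0)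
      (𝓝 (deriv (deriv (Lam Δ)) 0 / 2)) := by
  have hL : ∀ x, HasDerivAt (Lam Δ) (deriv (Lam Δ) x) x := fun x =>
    (aux_deriv Δ hd x).differentiableAt.hasDerivAt
  have e : deriv (Lam Δ) = fun x => deriv Δ (Real.exp x) * Real.exp x :=
    funext fun x => (aux_deriv Δ hd x).deriv
  have hdd : DifferentiableAt ℝ (deriv (Lam Δ)) 0 := by
    rw [e]
    refine DifferentiableAt.mul ?_ Real.differentiableAt_exp
    refine DifferentiableAt.comp (g := deriv Δ) 0 ?_ Real.differentiableAt_exp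
    simpa using hDelta''
  have hs := hasDerivAt_iff_tendsto_slope.1 hdd.hasDerivAt
  refine HasDerivAt.lhopital_zero_nhdsNE
    (f' := fun x => deriv (Lam Δ) x - deriv (Lam Δ) 0) (g' := fun x => 2 * x) ?_ ?_ ?_ ?_ ?_ ?_
  · refine Eventually.of_forall fun x => ?_
    have h := (hL x).sub ((hasDerivAt_id x).const_mul (deriv (Lam Δ) 0))
    rw [mul_one] at h
    exact h
  · refine Eventually.of_forall fun x => ?_
    simpa using hasDerivAt_pow 2 x
  · filter_upwards [self_mem_nhdsWithin] with x hx
    exact mul_ne_zero two_ne_zero hx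
  · have h := ((hL 0).sub ((hasDerivAt_id (0:ℝ)).const_mul (deriv (Lam Δ) 0))).continuousAt.tendsto
    have h' := h.mono_left (nhdsWithin_le_nhds (s := {0}ᶜ))
    have e0 : (Lam Δ - fun y => deriv (Lam Δ) 0 * id y) 0 = 0 := by simp [Lam]
    rw [e0] at h'
    exact h'
  · have h : Tendsto (fun x : ℝ => x ^ 2) (𝓝 0) (𝓝 (0 ^ 2)) := (continuous_pow 2).tendsto 0
    simpa using h.mono_left (nhdsWithin_le_nhds (s := {0}ᶜ))
  · refine (hs.div_const 2).congr' ?_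
    filter_upwards [self_mem_nhdsWithin] with x hx
    have : x ≠ 0 := hx
    rw [slope_def_field]
    field_simp
    simp

/-- Limit (3.12) in the proof of Proposition 3.2: under Conditions (B1), (B2), (B3), twice
differentiability of `Δ` at `1` and the boundedness hypotheses on `H1`, `H2`, `H3`, for every
`a(t) > 0` with `a(t) → 0`, `v(δ(t))a(t) → ∞`, and every `θ ∈ ℝ`,
`a(t) log E[exp(θ (N(t)-E[N(t)])/√(v(δ(t))a(t)))] → θ² Λ''(0)/2`. -/
theorem limit_log_mgf_MD
    (n : ℕ) (d : ℕ → ℕ → ℝ) (δf : ℕ → ℝ → ℝ) (v Δ : ℝ → ℝ)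
    (hcond : PSCond n d δf v Δ)
    (hZsum : ∀ t : ℝ, 0 < t →
      Summable (fun j : ℕ => d j j * (δf j t) ^ j / Dser d j (δf j t)))
    (hZpos : ∀ t : ℝ, 0 < t → 0 < Znorm d δf t)
    -- `Δ` is twice differentiable at `1` (so `Λ''(0)` exists)
    (hDelta'' : DifferentiableAt ℝ (deriv Δ) 1)
    -- hypothesis (i): `H1(t)` is bounded whenever `u(t) → 1`
    (hH1 : ∀ u : ℝ → ℝ, (∀ t : ℝ, 0 < t → 0 < u t) → Tendsto u atTop (𝓝 1) →
      ∃ M : ℝ, ∀ t : ℝ, 0 < t →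
        |Real.log (Dser d n (u t * δf n t) / Dser d n (δf n t))
          - v (δf n t) * (Δ (u t) - Δ 1)| ≤ M)
    -- hypothesis (ii): `H2(t)` is bounded
    (hH2 : ∃ M : ℝ, ∀ t : ℝ, 0 < t →
      |Real.sqrt (v (δf n t)) * (deriv (Lam Δ) 0
        - δf n t * deriv (Dser d n) (δf n t) / (v (δf n t) * Dser d n (δf n t)))| ≤ M)
    -- hypothesis (iii): `H3(t)` is bounded
    (hH3 : ∃ M : ℝ, ∀ t : ℝ, 0 < t →
      |(Real.sqrt (v (δf n t)))⁻¹ *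
        (δf n t * deriv (Dser d n) (δf n t) / Dser d n (δf n t) - meanN d δf t)| ≤ M)
    (a : ℝ → ℝ) (ha_pos : ∀ t : ℝ, 0 < t → 0 < a t)
    (ha0 : Tendsto a atTop (𝓝 0))
    (hva : Tendsto (fun t : ℝ => v (δf n t) * a t) atTop atTop) :
    ∀ θ : ℝ,
      Tendsto (fun t : ℝ => a t *
          Real.log (∑' k : ℕ,
            Real.exp (θ * (((k : ℝ) - meanN d δf t) / Real.sqrt (v (δf n t) * a t)))
              * pmfN d δf t k))
        atTop (𝓝 (θ ^ 2 * deriv (deriv (Lam Δ)) 0 / 2)) := by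
  intro θ
  obtain ⟨M2, hM2⟩ := hH2
  obtain ⟨M3, hM3⟩ := hH3
  set s : ℝ → ℝ := fun t => Real.sqrt (v (δf n t) * a t) with hs
  have hs_top : Tendsto s atTop atTop := Real.tendsto_sqrt_atTop.comp hva
  have hx0 : Tendsto (fun t => θ / s t) atTop (𝓝 0) := hs_top.const_div_atTop θ
  have hu1 : Tendsto (fun t => Real.exp (θ / s t)) atTop (𝓝 1) := by
    have h := (Real.continuous_exp.tendsto 0).comp hx0
    rw [Real.exp_zero] at h
    exact h
  obtain ⟨M, hM⟩ := hH1 (fun t => Real.exp (θ / s t)) (fun t _ => Real.exp_pos _) hu1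
  have hmain : Tendsto (fun t => s t ^ 2 * (Lam Δ (θ / s t) - deriv (Lam Δ) 0 * (θ / s t))) atTop
      (𝓝 (θ ^ 2 * deriv (deriv (Lam Δ)) 0 / 2)) := by
    rcases eq_or_ne θ 0 with h0 | h0
    · simp [h0, Lam]
    · have hne : Tendsto (fun t => θ / s t) atTop (𝓝[≠] 0) := by
        refine tendsto_nhdsWithin_iff.2 ⟨hx0, ?_⟩
        filter_upwards [hs_top.eventually_gt_atTop 0] with t ht
        exact div_ne_zero h0 ht.ne'
      have h := ((aux_taylor Δ hcond.Delta_diff hDelta'').comp hne).const_mul (θ ^ 2)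
      rw [mul_div_assoc]
      refine h.congr' ?_
      filter_upwards [hs_top.eventually_gt_atTop 0] with t ht
      simp only [Function.comp]
      have := ht.ne'
      field_simp
  have hbd : Tendsto (fun t => (2 * Real.log 2 + M) * a t + |θ| * (M2 + M3) * Real.sqrt (a t)) atTop
      (𝓝 0) := by
    have h1 := (Real.continuous_sqrt.tendsto 0).comp ha0
    simpa using (ha0.const_mul (2 * Real.log 2 + M)).add (h1.const_mul (|θ| * (M2 + M3)))
  have hw : ∀ᶠ t in atTop, ∀ k < n, d k k * (δf k t) ^ k / Dser d k (δf k t)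
      ≤ d k n * (δf n t) ^ k / Dser d n (δf n t) := by
    have : ∀ᶠ t in atTop, ∀ k ∈ Finset.range n, d k k * (δf k t) ^ k / Dser d k (δf k t)
      ≤ d k n * (δf n t) ^ k / Dser d n (δf n t) := by
      rw [Filter.eventually_all_finset]
      intro k hk
      rw [Finset.mem_range] at hk
      rcases (hcond.d_nonneg k n).eq_or_lt with h0 | h0
      · simp [← h0, hcond.B3_zero k hk h0.symm]
      · filter_upwards [(hcond.B3_lim k hk h0).eventually (gt_mem_nhds one_pos),
          eventually_gt_atTop 0] with t h1 ht
        have h2 := hcond.delta_pos n t ht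
        have h3 := hcond.D_pos n _ h2
        rw [div_lt_one (by positivity)] at h1
        exact h1.le
    simpa using this
  have hδ := hcond.delta_tendsto n
  have hlow1 := hδ.eventually (aux_low n d δf v Δ hcond)
  have hlowu := (Tendsto.pos_mul_atTop one_pos hu1 hδ).eventually (aux_low n d δf v Δ hcond)
  have hdiff : Tendsto (fun t : ℝ => a t *
          Real.log (∑' k : ℕ,
            Real.exp (θ * (((k : ℝ) - meanN d δf t) / Real.sqrt (v (δf n t) * a t)))
              * pmfN d δf t k)
          - s t ^ 2 * (Lam Δ (θ / s t) - deriv (Lam Δ) 0 * (θ / s t))) atTop (𝓝 0) := by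
    refine squeeze_zero_norm' ?_ hbd
    filter_upwards [hw, hlow1, hlowu, eventually_gt_atTop 0] with t hwt h1 h2 ht
    have hδt := hcond.delta_pos n t ht
    have hv := hcond.v_pos _ hδt
    have hat := ha_pos t ht
    have hDt := hcond.D_pos n _ hδt
    have hst : 0 < s t := Real.sqrt_pos.2 (mul_pos hv hat)
    have hss : s t ^ 2 = v (δf n t) * a t := Real.sq_sqrt (mul_pos hv hat).le
    have hstm : s t = Real.sqrt (v (δf n t)) * Real.sqrt (a t) := Real.sqrt_mul hv.le _
    have hsv : 0 < Real.sqrt (v (δf n t)) := Real.sqrt_pos.2 hv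
    have hsa : 0 < Real.sqrt (a t) := Real.sqrt_pos.2 hat
    have hsv2 : Real.sqrt (v (δf n t)) ^ 2 = v (δf n t) := Real.sq_sqrt hv.le
    have hsa2 : Real.sqrt (a t) ^ 2 = a t := Real.sq_sqrt hat.le
    have hMt := hM t ht
    have hM2t := hM2 t ht
    have hM3t := hM3 t ht
    have hup : 0 < Real.exp (θ / s t) := Real.exp_pos _
    have hDu := hcond.D_pos n _ (mul_pos hup hδt)
    have hZ := aux_sandwich n d δf v Δ hcond t 1 ht one_pos hwt (by simpa using h1)
    have hS := aux_sandwich n d δf v Δ hcond t _ ht hup hwt h2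
    simp only [one_pow, one_mul, div_self hDt.ne'] at hZ
    change _ ≤ Znorm d δf t ∧ Znorm d δf t ≤ _ at hZ
    set Z := Znorm d δf t with hZdef
    set m := meanN d δf t with hm
    set S := ∑' k : ℕ, Real.exp (θ / s t) ^ k * (d k k * (δf k t) ^ k / Dser d k (δf k t)) with hSdef
    have hE : (∑' k : ℕ,
            Real.exp (θ * (((k : ℝ) - m) / Real.sqrt (v (δf n t) * a t)))
              * pmfN d δf t k) = Real.exp (-(θ * m / s t)) / Z * S := by
      rw [hSdef, ← tsum_mul_left]
      refine tsum_congr fun k => ?_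
      have : Real.exp (θ * (((k : ℝ) - m) / Real.sqrt (v (δf n t) * a t)))
          = Real.exp (-(θ * m / s t)) * Real.exp (θ / s t) ^ k := by
        rw [← Real.exp_nat_mul, ← Real.exp_add]
        congr 1
        change θ * (((k : ℝ) - m) / s t) = _
        ring
      rw [this, pmfN, ← hZdef]
      ring
    rw [hE]
    have hZp : 0 < Z := hZpos t ht
    set Q := Dser d n (Real.exp (θ / s t) * δf n t) / Dser d n (δf n t) with hQ
    have hQp : 0 < Q := div_pos hDu hDt
    have hSp : 0 < S := lt_of_lt_of_le (by positivity) hS.1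
    have hlog : Real.log (Real.exp (-(θ * m / s t)) / Z * S)
        = -(θ * m / s t) - Real.log Z + Real.log S := by
      rw [Real.log_mul (by positivity) hSp.ne', Real.log_div (by positivity) hZp.ne', Real.log_exp]
    rw [hlog]
    have l1 : Real.log Z ≤ 0 := Real.log_nonpos hZp.le hZ.2
    have l2 : -Real.log 2 ≤ Real.log Z := by
      rw [← Real.log_inv]; exact Real.log_le_log (by norm_num) (by linarith [hZ.1])
    have l3 : Real.log S ≤ Real.log Q := Real.log_le_log hSp hS.2
    have l4 : Real.log Q - Real.log 2 ≤ Real.log S := by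
      rw [← Real.log_div hQp.ne' two_ne_zero]
      exact Real.log_le_log (by positivity) hS.1
    have lam : Δ (Real.exp (θ / s t)) - Δ 1 = Lam Δ (θ / s t) := rfl
    simp only [lam] at hMt
    have l5 : 0 ≤ Real.log 2 := Real.log_nonneg one_le_two
    have hA : |Real.log S - Real.log Z - v (δf n t) * Lam Δ (θ / s t)| ≤ 2 * Real.log 2 + M := by
      rw [abs_le] at hMt ⊢
      constructor <;> linarith [hMt.1, hMt.2]
    set L0 := deriv (Lam Δ) 0 with hL0
    set G := δf n t * deriv (Dser d n) (δf n t) / Dser d n (δf n t) with hG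
    set r := Real.sqrt (v (δf n t)) with hr
    have hB : |r⁻¹ * (v (δf n t) * L0 - m)| ≤ M2 + M3 := by
      have e : r⁻¹ * (v (δf n t) * L0 - m) = r * (L0
        - δf n t * deriv (Dser d n) (δf n t) / (v (δf n t) * Dser d n (δf n t))) +
          r⁻¹ * (G - m) := by
        rw [hG, ← hsv2]
        field_simp
        ring
      rw [e]
      exact (abs_add_le _ _).trans (add_le_add hM2t hM3t)
    have hfin : a t * (-(θ * m / s t) - Real.log Z + Real.log S)
        - s t ^ 2 * (Lam Δ (θ / s t) - L0 * (θ / s t))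
        = (Real.log S - Real.log Z - v (δf n t) * Lam Δ (θ / s t)) * a t
          + θ * (r⁻¹ * (v (δf n t) * L0 - m)) * Real.sqrt (a t) := by
      have e1 : a t / s t = r⁻¹ * Real.sqrt (a t) := by
        rw [hstm]
        nth_rewrite 1 [← hsa2]
        field_simp
      have e2 : a t * (-(θ * m / s t)) = - (θ * m * (a t / s t)) := by ring
      have e3 : s t ^ 2 * (Lam Δ (θ / s t) - L0 * (θ / s t))
        = v (δf n t) * a t * Lam Δ (θ / s t) - v (δf n t) * L0 * θ * (a t / s t) := by
        rw [hss]; ring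
      rw [e3, add_comm, mul_add, mul_sub, e2, e1]
      ring
    rw [hfin, Real.norm_eq_abs]
    refine (abs_add_le _ _).trans ?_
    rw [abs_mul, abs_mul, abs_mul, abs_of_pos hat, abs_of_pos hsa]
    gcongr
  simpa using hdiff.add hmain
end

section
/- Under Conditions (B1), (B2) and (B3), for every function u : (0,∞) → (0,∞) with u(t) → 1 as t → ∞, one has lim_{t→∞} R_n(u(t),t) · D(δ(t)) / D(u(t)δ(t)) = 0. -/
open Filter Topology

/-- From the proof of Proposition 3.2: under Conditions (B1), (B2), (B3), for every function
`u(t) → 1` as `t → ∞`, `R_n(u(t),t) · D(δ(t))/D(u(t)δ(t)) → 0` as `t → ∞`. -/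
theorem Rn_ratio_limit_of_tendsto_one
    (n : ℕ) (d : ℕ → ℕ → ℝ) (δf : ℕ → ℝ → ℝ) (v Δ : ℝ → ℝ)
    (hcond : PSCond n d δf v Δ) :
    ∀ u : ℝ → ℝ, (∀ t : ℝ, 0 < t → 0 < u t) → Tendsto u atTop (𝓝 1) →
      Tendsto (fun t : ℝ => Rfun n d δf (u t) t * Dser d n (δf n t) / Dser d n (u t * δf n t))
        atTop (𝓝 0) := by
  intro u hu hu1
  obtain ⟨m, hm, hdm⟩ := hcond.B2 n
  rw [hcond.B1_d m hm m] at hdm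
  have hx : Tendsto (fun t => u t * δf n t) atTop atTop :=
    Tendsto.pos_mul_atTop one_pos hu1 (hcond.delta_tendsto n)
  have key : ∀ k : ℕ, k < n →
      Tendsto (fun x : ℝ => d k n * x ^ k / Dser d n x) atTop (𝓝 0) := by
    intro k hk
    have h0 : Tendsto (fun x : ℝ => (d k n / d m n) * x⁻¹) atTop (𝓝 0) := by
      simpa using tendsto_inv_atTop_zero.const_mul (d k n / d m n)
    refine tendsto_of_tendsto_of_tendsto_of_le_of_le' tendsto_const_nhds h0 ?_ ?_
    · filter_upwards [eventually_ge_atTop (1 : ℝ)] with x hx1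
      have hx0 : 0 < x := by linarith
      have := hcond.D_pos n x hx0
      have := hcond.d_nonneg k n
      positivity
    · filter_upwards [eventually_ge_atTop (1 : ℝ)] with x hx1
      have hx0 : 0 < x := by linarith
      have hD := hcond.D_pos n x hx0
      have hdk := hcond.d_nonneg k n
      have h1 : d m n * x ^ m ≤ Dser d n x :=
        (hcond.D_summable n x hx0).le_tsum m
          (fun j _ => mul_nonneg (hcond.d_nonneg j n) (pow_nonneg hx0.le j))
      have h2 : x ^ (k + 1) ≤ x ^ m := pow_le_pow_right₀ hx1 (by omega)
      have h3 : d m n * x ^ (k + 1) ≤ Dser d n x :=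
        (mul_le_mul_of_nonneg_left h2 hdm.le).trans h1
      calc d k n * x ^ k / Dser d n x ≤ d k n * x ^ k / (d m n * x ^ (k + 1)) := by
            apply div_le_div_of_nonneg_left _ (by positivity) h3
            positivity
        _ = d k n / d m n * x⁻¹ := by
            field_simp
            ring
  have hsum : Tendsto (fun t : ℝ => ∑ k ∈ Finset.range n,
      (d k k * (u t * δf k t) ^ k / Dser d k (δf k t)
        - d k n * (u t * δf n t) ^ k / Dser d n (δf n t)) *
        (Dser d n (δf n t) / Dser d n (u t * δf n t))) atTop (𝓝 0) := by
    rw [← Finset.sum_const_zero (s := Finset.range n) (ι := ℕ)]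
    refine tendsto_finsetSum _ fun k hk => ?_
    have hk := Finset.mem_range.1 hk
    rcases (hcond.d_nonneg k n).eq_or_lt with h0 | h0
    · simp [← h0, hcond.B3_zero k hk h0.symm]
    · have hA := ((hcond.B3_lim k hk h0).sub_const 1).mul ((key k hk).comp hx)
      rw [mul_zero] at hA
      refine hA.congr' ?_
      filter_upwards [eventually_gt_atTop (0 : ℝ)] with t ht
      have e1 := hu t ht
      have e2 := hcond.delta_pos n t ht
      have e3 := hcond.D_pos n _ e2
      have e4 := hcond.D_pos n _ (mul_pos e1 e2)
      have e5 := hcond.D_pos k _ (hcond.delta_pos k t ht)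
      simp only [Function.comp_apply, mul_pow]
      field_simp
  refine hsum.congr fun t => ?_
  rw [Rfun, mul_div_assoc, Finset.sum_mul]
end

section
/- Assume Conditions (B1), (B2) and (B3), that Λ(θ) := Δ(e^θ) − Δ(1) is differentiable at 0, and that lim_{t→∞} E[N(t)]/v(δ(t)) = Λ'(0). Then for every θ ∈ ℝ one has lim_{t→∞} (1/v(δ(t))) log E[ exp( θ (N(t) − E[N(t)]) ) ] = Λ(θ) − θΛ'(0). -/
open Filter Topology

theorem poly_le_half (n : ℕ) (a : ℕ → ℝ) (ha : ∀ k, 0 ≤ a k)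
    (hs : ∀ x : ℝ, 0 < x → Summable (fun k : ℕ => a k * x ^ k))
    (hm : ∃ m, n ≤ m ∧ 0 < a m) :
    ∀ᶠ x : ℝ in atTop, (1 / 2) * (∑' k, a k * x ^ k) ≤ ∑' k, a (k + n) * x ^ (k + n) := by
  obtain ⟨m, hnm, ham⟩ := hm
  have h1 : Tendsto (fun x : ℝ => ∑ k ∈ Finset.range n, a k * (x ^ k / x ^ m)) atTop (𝓝 0) := by
    have : Tendsto (fun x : ℝ => ∑ k ∈ Finset.range n, a k * (x ^ k / x ^ m)) atTop
        (𝓝 (∑ k ∈ Finset.range n, a k * 0)) := by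
      apply tendsto_finsetSum
      intro k hk
      apply Tendsto.const_mul
      exact tendsto_pow_div_pow_atTop_zero (by have := Finset.mem_range.1 hk; omega)
    simpa using this
  filter_upwards [h1.eventually (gt_mem_nhds ham), eventually_gt_atTop 0] with x hx hx0
  have hS := hs x hx0
  have hsplit := hS.sum_add_tsum_nat_add n
  have hT : Summable (fun k => a (k + n) * x ^ (k + n)) := (summable_nat_add_iff n).2 hS
  have hle : a m * x ^ m ≤ ∑' k, a (k + n) * x ^ (k + n) := by
    have := hT.le_tsum (m - n) (fun k _ => mul_nonneg (ha _) (by positivity))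
    simpa [Nat.sub_add_cancel hnm] using this
  have hp : ∑ k ∈ Finset.range n, a k * x ^ k ≤ a m * x ^ m := by
    have e : ∑ k ∈ Finset.range n, a k * x ^ k
        = (∑ k ∈ Finset.range n, a k * (x ^ k / x ^ m)) * x ^ m := by
      rw [Finset.sum_mul]
      refine Finset.sum_congr rfl fun k _ => ?_
      field_simp
    rw [e]
    gcongr
  linarith

theorem log_W_limit (n : ℕ) (d : ℕ → ℕ → ℝ) (δf : ℕ → ℝ → ℝ) (v Δ : ℝ → ℝ)
    (h : PSCond n d δf v Δ) (u : ℝ) (hu : 0 < u) :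
    (∀ᶠ t in atTop, 0 < ∑' k : ℕ, u ^ k * (d k k * (δf k t) ^ k / Dser d k (δf k t))) ∧
    Tendsto (fun t => (v (δf n t))⁻¹ *
      Real.log (∑' k : ℕ, u ^ k * (d k k * (δf k t) ^ k / Dser d k (δf k t)))) atTop
      (𝓝 (Δ u - Δ 1)) := by
  have hδ := h.delta_tendsto n
  have hD : ∀ k, n ≤ k → ∀ x, Dser d k x = Dser d n x := by
    intro k hk x
    unfold Dser
    simp only [h.B1_d k hk]
  have hB3 : ∀ᶠ t in atTop, ∀ k ∈ Finset.range n,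
      d k k * (δf k t) ^ k / Dser d k (δf k t) ≤ d k n * (δf n t) ^ k / Dser d n (δf n t) := by
    rw [Filter.eventually_all_finset]
    intro k hk
    have hk := Finset.mem_range.1 hk
    rcases (h.d_nonneg k n).eq_or_lt with h0 | h0
    · have := h.B3_zero k hk h0.symm
      simp [this, ← h0]
    · filter_upwards [(h.B3_lim k hk h0).eventually (gt_mem_nhds one_pos),
        eventually_gt_atTop 0] with t ht ht0
      have h1 := h.delta_pos n t ht0
      have h2 := h.D_pos n _ h1
      have h3 : 0 < d k n * (δf n t) ^ k / Dser d n (δf n t) := by positivity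
      exact ((div_lt_one h3).1 ht).le
  have hhalf := (hδ.const_mul_atTop hu).eventually (poly_le_half n (fun k => d k n)
    (fun k => h.d_nonneg k n) (h.D_summable n) (by
      obtain ⟨m, hm, hp⟩ := h.B2 n
      exact ⟨m, hm, by rwa [h.B1_d m hm] at hp⟩))
  have hbd : ∀ᶠ t in atTop,
      (1 / 2) * Dser d n (u * δf n t) / Dser d n (δf n t) ≤
        ∑' k : ℕ, u ^ k * (d k k * (δf k t) ^ k / Dser d k (δf k t)) ∧
      ∑' k : ℕ, u ^ k * (d k k * (δf k t) ^ k / Dser d k (δf k t)) ≤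
        Dser d n (u * δf n t) / Dser d n (δf n t) := by
    filter_upwards [hB3, hhalf, eventually_gt_atTop 0] with t h3 hh ht0
    have hx := h.delta_pos n t ht0
    have hDp := h.D_pos n _ hx
    have hux : 0 < u * δf n t := by positivity
    have hnn : ∀ k, 0 ≤ u ^ k * (d k k * (δf k t) ^ k / Dser d k (δf k t)) := by
      intro k
      have a1 := h.delta_pos k t ht0
      have a2 := h.D_pos k _ a1
      have a3 := h.d_nonneg k k
      positivity
    have htail : ∀ k, n ≤ k → u ^ k * (d k k * (δf k t) ^ k / Dser d k (δf k t))
        = d k n * (u * δf n t) ^ k / Dser d n (δf n t) := by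
      intro k hk
      rw [hD k hk, h.B1_delta k hk, h.B1_d k hk, mul_pow]
      ring
    have hle : ∀ k, u ^ k * (d k k * (δf k t) ^ k / Dser d k (δf k t))
        ≤ d k n * (u * δf n t) ^ k / Dser d n (δf n t) := by
      intro k
      rcases lt_or_ge k n with hk | hk
      · have := mul_le_mul_of_nonneg_left (h3 k (Finset.mem_range.2 hk)) (pow_pos hu k).le
        refine this.trans (le_of_eq ?_)
        rw [mul_pow]
        ring
      · exact (htail k hk).le
    have hS := (h.D_summable n _ hux).div_const (Dser d n (δf n t))
    have hSW := Summable.of_nonneg_of_le hnn hle hS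
    constructor
    · rw [← hSW.sum_add_tsum_nat_add n]
      have e : ∑' k, u ^ (k + n) * (d (k + n) (k + n) * (δf (k + n) t) ^ (k + n)
          / Dser d (k + n) (δf (k + n) t))
          = (∑' k, d (k + n) n * (u * δf n t) ^ (k + n)) / Dser d n (δf n t) := by
        rw [← tsum_div_const]
        exact tsum_congr fun k => htail (k + n) (Nat.le_add_left _ _)
      rw [e]
      have : 0 ≤ ∑ k ∈ Finset.range n, u ^ k * (d k k * (δf k t) ^ k / Dser d k (δf k t)) :=
        Finset.sum_nonneg fun k _ => hnn k
      have h5 : (1 / 2) * Dser d n (u * δf n t) / Dser d n (δf n t) ≤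
          (∑' k, d (k + n) n * (u * δf n t) ^ (k + n)) / Dser d n (δf n t) :=
        div_le_div_of_nonneg_right hh hDp.le
      linarith
    · refine (hSW.tsum_le_tsum hle hS).trans (le_of_eq ?_)
      rw [tsum_div_const]
      rfl
  have hpos : ∀ᶠ t in atTop,
      0 < (1 / 2) * Dser d n (u * δf n t) / Dser d n (δf n t) := by
    filter_upwards [eventually_gt_atTop 0] with t ht0
    have hx := h.delta_pos n t ht0
    have := h.D_pos n _ hx
    have := h.D_pos n _ (mul_pos hu hx)
    positivity
  refine ⟨by filter_upwards [hbd, hpos] with t a b using b.trans_le a.1, ?_⟩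
  have l1 := (h.B1_lim u hu).comp hδ
  have l2 := (h.B1_lim 1 one_pos).comp hδ
  have l3 : Tendsto (fun t => (v (δf n t))⁻¹ * Real.log (1 / 2)) atTop (𝓝 0) := by
    simpa using ((tendsto_inv_atTop_zero.comp (h.v_tendsto.comp hδ)).mul_const (Real.log (1 / 2)))
  have up := l1.sub l2
  have lo := l3.add up
  rw [zero_add] at lo
  refine tendsto_of_tendsto_of_tendsto_of_le_of_le' lo up ?_ ?_
  · filter_upwards [hbd, hpos, eventually_gt_atTop 0] with t a b ht0
    have hx := h.delta_pos n t ht0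
    have c1 := h.D_pos n _ hx
    have c2 := h.D_pos n _ (mul_pos hu hx)
    have c3 := h.v_pos _ hx
    have := Real.log_le_log b a.1
    rw [Real.log_div (by positivity) c1.ne', Real.log_mul (by norm_num) c2.ne'] at this
    have := mul_le_mul_of_nonneg_left this (inv_pos.2 c3).le
    simp only [Function.comp, one_mul]
    linarith
  · filter_upwards [hbd, hpos, eventually_gt_atTop 0] with t a b ht0
    have hx := h.delta_pos n t ht0
    have c1 := h.D_pos n _ hx
    have c2 := h.D_pos n _ (mul_pos hu hx)
    have c3 := h.v_pos _ hx
    have := Real.log_le_log (b.trans_le a.1) a.2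
    rw [Real.log_div c2.ne' c1.ne'] at this
    have := mul_le_mul_of_nonneg_left this (inv_pos.2 c3).le
    simp only [Function.comp, one_mul]
    linarith

/-- Remark 3.3 of the paper: under Conditions (B1), (B2), (B3), if `Λ` is differentiable at `0`
and `E[N(t)]/v(δ(t)) → Λ'(0)`, then for all `θ ∈ ℝ`,
`(1/v(δ(t))) log E[exp(θ(N(t)-E[N(t)]))] → Λ(θ) - θΛ'(0)`. -/
theorem limit_log_centered_mgf
    (n : ℕ) (d : ℕ → ℕ → ℝ) (δf : ℕ → ℝ → ℝ) (v Δ : ℝ → ℝ)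
    (hcond : PSCond n d δf v Δ)
    (hZsum : ∀ t : ℝ, 0 < t →
      Summable (fun j : ℕ => d j j * (δf j t) ^ j / Dser d j (δf j t)))
    (hZpos : ∀ t : ℝ, 0 < t → 0 < Znorm d δf t)
    (hLamDiff : DifferentiableAt ℝ (Lam Δ) 0)
    (hmean : Tendsto (fun t : ℝ => meanN d δf t / v (δf n t)) atTop (𝓝 (deriv (Lam Δ) 0))) :
    ∀ θ : ℝ,
      Tendsto (fun t : ℝ => (v (δf n t))⁻¹ *
          Real.log (∑' k : ℕ, Real.exp (θ * ((k : ℝ) - meanN d δf t)) * pmfN d δf t k))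
        atTop (𝓝 (Lam Δ θ - θ * deriv (Lam Δ) 0)) := by
  intro θ
  obtain ⟨p1, l1⟩ := log_W_limit n d δf v Δ hcond (Real.exp θ) (Real.exp_pos θ)
  obtain ⟨-, l2⟩ := log_W_limit n d δf v Δ hcond 1 one_pos
  have l := (l1.sub l2).sub (hmean.const_mul θ)
  have e : Δ (Real.exp θ) - Δ 1 - (Δ 1 - Δ 1) - θ * deriv (Lam Δ) 0
      = Lam Δ θ - θ * deriv (Lam Δ) 0 := by
    unfold Lam
    ring
  rw [e] at l
  refine l.congr' ?_
  filter_upwards [p1, eventually_gt_atTop 0] with t hp ht0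
  have hZ := hZpos t ht0
  have e1 : ∑' k : ℕ, (1 : ℝ) ^ k * (d k k * (δf k t) ^ k / Dser d k (δf k t))
      = Znorm d δf t := by
    simp [Znorm]
  have e2 : ∑' k : ℕ, Real.exp (θ * ((k : ℝ) - meanN d δf t)) * pmfN d δf t k
      = Real.exp (-(θ * meanN d δf t)) *
        ((∑' k : ℕ, Real.exp θ ^ k * (d k k * (δf k t) ^ k / Dser d k (δf k t)))
          / Znorm d δf t) := by
    rw [← tsum_div_const, ← tsum_mul_left]
    refine tsum_congr fun k => ?_
    have : Real.exp (θ * ((k : ℝ) - meanN d δf t))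
        = Real.exp (-(θ * meanN d δf t)) * Real.exp θ ^ k := by
      rw [← Real.exp_nat_mul, ← Real.exp_add]
      ring_nf
    rw [this, pmfN]
    ring
  rw [e1, e2, Real.log_mul (Real.exp_pos _).ne' (div_pos hp hZ).ne', Real.log_exp,
    Real.log_div hp.ne' hZ.ne']
  ring
end

section
/- For every α ∈ (0,1], β, γ, λ > 0 and every u > 0, one has lim_{t→∞} t^{−1/α} log E^γ_{α,β}(λ u t) = (λu)^{1/α}. -/
open Filter Topology

/-- The Prabhakar (three-parameter Mittag-Leffler) function
`E^γ_{α,β}(u) = ∑_{k≥0} u^k (γ)_k / (k! Γ(αk+β))`. -/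
noncomputable def prabhakar (α β γ : ℝ) (u : ℝ) : ℝ :=
  ∑' k : ℕ, u ^ k * Polynomial.eval γ (ascPochhammer ℝ k)
    / ((k.factorial : ℝ) * Real.Gamma (α * (k : ℝ) + β))

lemma pk_gamma_lower (s z : ℝ) (hs : 0 ≤ s) (hz : 0 < z) :
    z ^ s * Real.exp (-z) ≤ Real.Gamma (s + 1) := by
  have hc := Real.GammaIntegral_convergent (s := s + 1) (by linarith)
  rw [Real.Gamma_eq_integral (by linarith)]
  simp only [add_sub_cancel_right] at hc ⊢
  have h1 : ∫ x in Set.Ioi z, z ^ s * Real.exp (-x) = z ^ s * Real.exp (-z) := by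
    rw [MeasureTheory.integral_const_mul, integral_exp_neg_Ioi]
  rw [← h1]
  have hsub : Set.Ioi z ⊆ Set.Ioi 0 := Set.Ioi_subset_Ioi hz.le
  calc _ ≤ ∫ x in Set.Ioi z, Real.exp (-x) * x ^ s := by
        apply MeasureTheory.setIntegral_mono_on
        · exact (integrableOn_exp_neg_Ioi z).const_mul _
        · exact hc.mono_set hsub
        · exact measurableSet_Ioi
        · intro x hx
          rw [mul_comm]
          gcongr
          exact (le_of_lt hx)
    _ ≤ _ := by
        apply MeasureTheory.setIntegral_mono_set hc
        · filter_upwards [MeasureTheory.self_mem_ae_restrict measurableSet_Ioi] with x hx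
          have : 0 < x := hx
          simp only [Pi.zero_apply]; positivity
        · exact hsub.eventuallyLE

lemma pk_gamma_upper (s z ε : ℝ) (hs : 0 ≤ s) (hz : 0 < z) (hε : 0 < ε) (hsz : s ≤ (1 - ε) * z) :
    Real.Gamma (s + 1) ≤ z ^ s * Real.exp (-s) / ε := by
  have hc := Real.GammaIntegral_convergent (s := s + 1) (by linarith)
  rw [Real.Gamma_eq_integral (by linarith)]
  simp only [add_sub_cancel_right] at hc ⊢
  have h1 : ∫ x in Set.Ioi (0:ℝ), z ^ s * Real.exp (-s) * Real.exp (-ε * x)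
      = z ^ s * Real.exp (-s) / ε := by
    rw [MeasureTheory.integral_const_mul, integral_exp_mul_Ioi (by linarith)]
    simp [div_eq_mul_inv]
  rw [← h1]
  apply MeasureTheory.setIntegral_mono_on hc
  · exact (integrableOn_exp_mul_Ioi (by linarith) 0).const_mul _
  · exact measurableSet_Ioi
  · intro x hx
    have hx : 0 < x := hx
    have e1 : x ^ s = z ^ s * (x / z) ^ s := by
      rw [← Real.mul_rpow hz.le (by positivity)]
      congr 1; field_simp
    have e2 : (x / z) ^ s ≤ Real.exp (s * (x / z - 1)) := by
      rw [Real.rpow_def_of_pos (by positivity)]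
      apply Real.exp_le_exp.2
      rw [mul_comm]
      exact mul_le_mul_of_nonneg_left (Real.log_le_sub_one_of_pos (by positivity)) hs
    have e3 : s * (x / z) ≤ (1 - ε) * x := by
      rw [← mul_div_assoc, div_le_iff₀ hz]; nlinarith
    calc Real.exp (-x) * x ^ s ≤ Real.exp (-x) * (z ^ s * Real.exp (s * (x / z - 1))) := by
          rw [e1]; gcongr
      _ = z ^ s * Real.exp (-x + s * (x / z - 1)) := by rw [Real.exp_add]; ring
      _ ≤ z ^ s * Real.exp (-s + -ε * x) := by
          refine mul_le_mul_of_nonneg_left (Real.exp_le_exp.2 ?_) (by positivity)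
          linarith
      _ = _ := by rw [Real.exp_add]; ring

noncomputable def pkc (γ : ℝ) (k : ℕ) : ℝ :=
  Polynomial.eval γ (ascPochhammer ℝ k) / (k.factorial : ℝ)

lemma pkc_pos (γ : ℝ) (hγ : 0 < γ) (k : ℕ) : 0 < pkc γ k :=
  div_pos (ascPochhammer_pos k γ hγ) (by positivity)

lemma pkc_succ (γ : ℝ) (k : ℕ) : pkc γ (k + 1) = pkc γ k * ((γ + k) / (k + 1)) := by
  unfold pkc
  rw [ascPochhammer_succ_eval, Nat.factorial_succ]
  push_cast
  rw [div_mul_div_comm, mul_comm ((k : ℝ) + 1)]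

lemma pkc_lower (γ : ℝ) (hγ : 0 < γ) (k : ℕ) : γ ≤ pkc γ (k + 1) * ((k + 1 : ℕ) : ℝ) := by
  induction k with
  | zero => simp [pkc]
  | succ k ih =>
    rw [pkc_succ γ (k + 1)]
    push_cast at ih ⊢
    have hp := pkc_pos γ hγ (k + 1)
    have : pkc γ (k + 1) * ((γ + (↑k + 1)) / (↑k + 1 + 1)) * (↑k + 1 + 1)
        = pkc γ (k + 1) * (γ + (↑k + 1)) := by
      field_simp
    rw [this]
    nlinarith

lemma pk_term (α β γ z : ℝ) (hα : 0 < α) (hβ : 0 < β) (hz : 0 < z) (k : ℕ) :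
    (z ^ α) ^ k * Polynomial.eval γ (ascPochhammer ℝ k)
      / ((k.factorial : ℝ) * Real.Gamma (α * (k : ℝ) + β))
    = z ^ (-β) * (pkc γ k * (α * k + β)) *
      (z ^ (α * k + β) / Real.Gamma (α * k + β + 1)) := by
  have hs : 0 < α * (k:ℝ) + β := by positivity
  have hG := Real.Gamma_pos_of_pos hs
  rw [Real.Gamma_add_one hs.ne', Real.rpow_add hz, Real.rpow_mul hz.le, Real.rpow_natCast,
    Real.rpow_neg hz.le]
  have : z ^ β ≠ 0 := by positivity
  unfold pkc
  field_simp

lemma pk_summable (α β γ q : ℝ) (hα : 0 < α) (hβ : 0 < β) (hγ : 0 < γ) (hq0 : 0 < q)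
    (hq : q < 1) : Summable (fun k : ℕ => pkc γ k * (α * k + β) * q ^ k) := by
  have hpos : ∀ k : ℕ, 0 < pkc γ k * (α * k + β) * q ^ k := fun k => by
    have := pkc_pos γ hγ k
    positivity
  apply summable_of_ratio_test_tendsto_lt_one hq (Eventually.of_forall fun k => (hpos k).ne')
  have h1 : Tendsto (fun k : ℕ => (γ + k) / ((k:ℝ) + 1)) atTop (𝓝 1) := by
    have := tendsto_add_mul_div_add_mul_atTop_nhds γ 1 1 (one_ne_zero (α := ℝ))
    simpa [add_comm] using this
  have h2 : Tendsto (fun k : ℕ => (α * (k + 1) + β) / (α * (k:ℝ) + β)) atTop (𝓝 1) := by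
    have := tendsto_add_mul_div_add_mul_atTop_nhds (α + β) β α hα.ne'
    rw [div_self hα.ne'] at this
    refine this.congr fun k => ?_
    congr 1 <;> ring
  have h3 := (h1.mul h2).mul_const q
  simp only [one_mul] at h3
  refine h3.congr fun k => ?_
  rw [Real.norm_of_nonneg (hpos _).le, Real.norm_of_nonneg (hpos _).le, pkc_succ]
  have := (pkc_pos γ hγ k).ne'
  have h5 : α * (k:ℝ) + β ≠ 0 := by positivity
  push_cast
  rw [pow_succ]
  field_simp

lemma pk_upper (α β γ ε : ℝ) (hα : 0 < α) (hβ : 0 < β) (hγ : 0 < γ) (hε : 0 < ε) :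
    ∃ K : ℝ, 0 < K ∧ ∀ z : ℝ, 0 < z →
      Summable (fun k : ℕ => (z ^ α) ^ k * Polynomial.eval γ (ascPochhammer ℝ k)
      / ((k.factorial : ℝ) * Real.Gamma (α * (k : ℝ) + β))) ∧
      prabhakar α β γ (z ^ α) ≤ K * z ^ (-β) * Real.exp ((1 + ε) * z) := by
  set q : ℝ := (1 + ε) ^ (-α) with hq
  have hq0 : 0 < q := by positivity
  have hq1 : q < 1 := Real.rpow_lt_one_of_one_lt_of_neg (by linarith) (by linarith)
  have hS := pk_summable α β γ q hα hβ hγ hq0 hq1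
  have hpos : ∀ k : ℕ, 0 < pkc γ k * (α * k + β) * q ^ k := fun k => by
    have := pkc_pos γ hγ k
    positivity
  refine ⟨∑' k : ℕ, pkc γ k * (α * k + β) * q ^ k, hS.tsum_pos (fun k => (hpos k).le) 0 (hpos 0),
    fun z hz => ?_⟩
  have hb : ∀ k : ℕ, (z ^ α) ^ k * Polynomial.eval γ (ascPochhammer ℝ k)
      / ((k.factorial : ℝ) * Real.Gamma (α * (k : ℝ) + β)) ≤
      pkc γ k * (α * k + β) * q ^ k * (z ^ (-β) * Real.exp ((1 + ε) * z)) := by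
    intro k
    rw [pk_term α β γ z hα hβ hz]
    have hc := pkc_pos γ hγ k
    have hs : 0 < α * (k:ℝ) + β := by positivity
    have hG := Real.Gamma_pos_of_pos (show 0 < α * (k:ℝ) + β + 1 by linarith)
    have h1 := pk_gamma_lower (α * k + β) ((1 + ε) * z) hs.le (by positivity)
    rw [Real.mul_rpow (by positivity) hz.le] at h1
    have h2 : z ^ (α * (k:ℝ) + β) / Real.Gamma (α * k + β + 1) ≤
        q ^ k * Real.exp ((1 + ε) * z) := by
      have hq2 : q ^ k * (1 + ε) ^ (α * (k:ℝ) + β) = (1 + ε) ^ β := by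
        rw [hq, ← Real.rpow_natCast, ← Real.rpow_mul (by positivity),
          ← Real.rpow_add (by positivity)]
        congr 1; ring
      have h1e : 1 ≤ (1 + ε) ^ β := Real.one_le_rpow (by linarith) hβ.le
      rw [div_le_iff₀ hG]
      calc z ^ (α * (k:ℝ) + β) ≤ z ^ (α * (k:ℝ) + β) * (1 + ε) ^ β :=
            le_mul_of_one_le_right (by positivity) h1e
        _ = q ^ k * Real.exp ((1 + ε) * z) * ((1 + ε) ^ (α * (k:ℝ) + β) * z ^ (α * (k:ℝ) + β)
              * Real.exp (-((1 + ε) * z))) := by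
            rw [← hq2]
            have : Real.exp ((1 + ε) * z) * Real.exp (-((1 + ε) * z)) = 1 := by
              rw [← Real.exp_add]; simp
            linear_combination (-(q ^ k * (1 + ε) ^ (α * (k:ℝ) + β) * z ^ (α * (k:ℝ) + β))) * this
        _ ≤ _ := by gcongr
    calc _ ≤ z ^ (-β) * (pkc γ k * (α * ↑k + β)) * (q ^ k * Real.exp ((1 + ε) * z)) := by gcongr
      _ = _ := by ring
  have hsum : Summable (fun k : ℕ => (z ^ α) ^ k * Polynomial.eval γ (ascPochhammer ℝ k)
      / ((k.factorial : ℝ) * Real.Gamma (α * (k : ℝ) + β))) := by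
    refine Summable.of_nonneg_of_le (fun k => ?_) hb (hS.mul_right _)
    have := ascPochhammer_pos k γ hγ
    have := Real.Gamma_pos_of_pos (show 0 < α * (k:ℝ) + β by positivity)
    positivity
  refine ⟨hsum, ?_⟩
  unfold prabhakar
  rw [mul_assoc, ← tsum_mul_right]
  exact hsum.tsum_le_tsum hb (hS.mul_right _)

lemma pk_lower (α β γ ε : ℝ) (hα : 0 < α) (hβ : 0 < β) (hγ : 0 < γ) (hε : 0 < ε) (hε1 : ε < 1) :
    ∃ K : ℝ, 0 < K ∧ ∀ᶠ z : ℝ in atTop,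
      K * z ^ (-β) * Real.exp ((1 - ε) * z) ≤ prabhakar α β γ (z ^ α) := by
  refine ⟨γ * α * ε * Real.exp (-α), by positivity, ?_⟩
  filter_upwards [eventually_ge_atTop ((α + β) / (1 - ε)), eventually_gt_atTop 0] with z hz1 hz
  rw [div_le_iff₀ (by linarith)] at hz1
  obtain ⟨_, _, hK⟩ := pk_upper α β γ 1 hα hβ hγ one_pos
  have hsum := (hK z hz).1
  set y := ((1 - ε) * z - β) / α with hy
  have hy1 : 1 ≤ y := by rw [hy, le_div_iff₀ hα]; linarith
  set k := ⌊y⌋₊ with hk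
  have hk1 : 1 ≤ k := Nat.le_floor (by exact_mod_cast hy1)
  have hk2 : (k:ℝ) ≤ y := Nat.floor_le (by linarith)
  have hk3 : y < k + 1 := Nat.lt_floor_add_one y
  have hαy : α * y = (1 - ε) * z - β := by rw [hy]; field_simp
  have hsu : α * k + β ≤ (1 - ε) * z := by nlinarith
  have hsl : (1 - ε) * z - α ≤ α * k + β := by nlinarith
  have hs : 0 < α * (k:ℝ) + β := by positivity
  have hG := Real.Gamma_pos_of_pos (show 0 < α * (k:ℝ) + β + 1 by linarith)
  have hU := pk_gamma_upper _ z ε hs.le hz hε hsu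
  have hc := pkc_pos γ hγ k
  have hle : (z ^ α) ^ k * Polynomial.eval γ (ascPochhammer ℝ k)
      / ((k.factorial : ℝ) * Real.Gamma (α * (k : ℝ) + β)) ≤ prabhakar α β γ (z ^ α) := by
    refine hsum.le_tsum k fun j _ => ?_
    have := ascPochhammer_pos j γ hγ
    have := Real.Gamma_pos_of_pos (show 0 < α * (j:ℝ) + β by positivity)
    positivity
  refine le_trans ?_ hle
  rw [pk_term α β γ z hα hβ hz]
  have h1 : γ * α ≤ pkc γ k * (α * k + β) := by
    have := pkc_lower γ hγ (k - 1)
    rw [Nat.sub_add_cancel hk1] at this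
    nlinarith [mul_pos hc hβ]
  have h2 : ε * (Real.exp (-α) * Real.exp ((1 - ε) * z)) ≤
      z ^ (α * (k:ℝ) + β) / Real.Gamma (α * k + β + 1) := by
    rw [← Real.exp_add, le_div_iff₀ hG]
    calc _ ≤ ε * Real.exp (α * k + β) * (z ^ (α * (k:ℝ) + β) * Real.exp (-(α * k + β)) / ε) := by
          refine mul_le_mul (mul_le_mul_of_nonneg_left (Real.exp_le_exp.2 ?_) hε.le) hU hG.le
            (by positivity)
          linarith
      _ = z ^ (α * (k:ℝ) + β) * (Real.exp (α * k + β) * Real.exp (-(α * k + β))) := by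
          field_simp
      _ = _ := by rw [← Real.exp_add]; simp
  calc _ = z ^ (-β) * (γ * α) * (ε * (Real.exp (-α) * Real.exp ((1 - ε) * z))) := by ring
    _ ≤ _ := by gcongr

lemma pk_log_aux (K β c z : ℝ) (hK : 0 < K) (hz : 0 < z) :
    Real.log (K * z ^ (-β) * Real.exp (c * z)) / z
      = Real.log K / z - β * (Real.log z / z) + c := by
  rw [Real.log_mul (by positivity) (by positivity), Real.log_mul (by positivity) (by positivity),
    Real.log_exp, Real.log_rpow hz]
  field_simp
  ring

lemma pk_lim_aux (K β c : ℝ) :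
    Tendsto (fun z => Real.log K / z - β * (Real.log z / z) + c) atTop (𝓝 c) := by
  have h1 : Tendsto (fun z : ℝ => Real.log K / z) atTop (𝓝 0) :=
    tendsto_const_nhds.div_atTop tendsto_id
  have h2 : Tendsto (fun z : ℝ => Real.log z / z) atTop (𝓝 0) :=
    Real.isLittleO_log_id_atTop.tendsto_div_nhds_zero
  simpa using (h1.sub (h2.const_mul β)).add_const c

lemma pk_main (α β γ : ℝ) (hα : 0 < α) (hβ : 0 < β) (hγ : 0 < γ) :
    Tendsto (fun z => Real.log (prabhakar α β γ (z ^ α)) / z) atTop (𝓝 1) := by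
  rw [tendsto_order]
  constructor
  · intro a ha
    obtain ⟨ε, hε, hε1, hεa⟩ : ∃ ε : ℝ, 0 < ε ∧ ε < 1 ∧ a < 1 - ε := by
      refine ⟨min (1 / 2) ((1 - a) / 2), ?_, ?_, ?_⟩
      · apply lt_min <;> linarith
      · have := min_le_left (1 / 2) ((1 - a) / 2); linarith
      · have := min_le_right (1 / 2) ((1 - a) / 2); linarith
    obtain ⟨K, hK, hL⟩ := pk_lower α β γ ε hα hβ hγ hε hε1
    filter_upwards [hL, (pk_lim_aux K β (1 - ε)).eventually_const_lt hεa,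
      eventually_gt_atTop 0] with z h1 h2 hz
    rw [← pk_log_aux K β (1 - ε) z hK hz] at h2
    refine h2.trans_le ?_
    gcongr
  · intro a ha
    obtain ⟨K, hK, hU⟩ := pk_upper α β γ ((a - 1) / 2) hα hβ hγ (by linarith)
    obtain ⟨K', hK', hL⟩ := pk_lower α β γ (1 / 2) hα hβ hγ (by norm_num) (by norm_num)
    filter_upwards [hL, (pk_lim_aux K β (1 + (a - 1) / 2)).eventually_lt_const
      (show 1 + (a - 1) / 2 < a by linarith), eventually_gt_atTop 0] with z h1 h2 hz
    rw [← pk_log_aux K β _ z hK hz] at h2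
    refine lt_of_le_of_lt ?_ h2
    have hp : 0 < prabhakar α β γ (z ^ α) := lt_of_lt_of_le (by positivity) h1
    have := (hU z hz).2
    gcongr

/-- Under (2.2) of the paper: for `α ∈ (0,1]`, `β, γ, λ, u > 0`,
`t^{-1/α} log E^γ_{α,β}(λ u t) → (λu)^{1/α}` as `t → ∞`. -/
theorem log_prabhakar_limit
    (α β γ lam u : ℝ)
    (hα : α ∈ Set.Ioc (0 : ℝ) 1) (hβ : 0 < β) (hγ : 0 < γ)
    (hlam : 0 < lam) (hu : 0 < u) :
    Tendsto (fun t : ℝ => t ^ (-(1 / α)) * Real.log (prabhakar α β γ (lam * u * t)))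
      atTop (𝓝 ((lam * u) ^ (1 / α))) := by
  obtain ⟨hα, -⟩ := hα
  have hlu : 0 < lam * u := by positivity
  have hz : Tendsto (fun t : ℝ => (lam * u * t) ^ (1 / α)) atTop atTop :=
    (tendsto_rpow_atTop (by positivity)).comp (tendsto_id.const_mul_atTop hlu)
  have h := ((pk_main α β γ hα hβ hγ).comp hz).const_mul ((lam * u) ^ (1 / α))
  rw [mul_one] at h
  refine h.congr' ?_
  filter_upwards [eventually_gt_atTop 0] with t ht
  have e1 : ((lam * u * t) ^ (1 / α)) ^ α = lam * u * t := by
    rw [← Real.rpow_mul (by positivity), one_div_mul_cancel hα.ne', Real.rpow_one]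
  simp only [Function.comp_apply]
  rw [e1, Real.mul_rpow hlu.le ht.le, Real.rpow_neg ht.le]
  have : (lam * u) ^ (1 / α) ≠ 0 := by positivity
  have : t ^ (1 / α) ≠ 0 := by positivity
  field_simp
end
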